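/- arXiv:1905.04131 — 4 statements merged into one kernel-verified Lean document; each statement's English description precedes it below -/
import Mathlib

section
/- Every generalized Stieltjes function of order 2 is logarithmically completely monotonic; that is, if f(x) = ∫_0^∞ (x+t)^{-2} dμ(t) + c for x > 0, where μ is a positive measure on [0,∞) making the integral converge and c ≥ 0, and f is not identically 0, then -f'(x)/f(x) is completely monotonic on (0,∞). -/
open MeasureTheory Filter Set

/-- The Laplace transform of `g`. -/
noncomputable def LaplaceTransform (g : ℝ → ℝ) (x : ℝ) : ℝ :=
  ∫ t in Set.Ioi (0:ℝ), Real.exp (-x * t) * g t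

/-- `f` is completely monotonic on `(0,∞)`. -/
def CompletelyMonotonic (f : ℝ → ℝ) : Prop :=
  (∀ x : ℝ, 0 < x → ContDiffAt ℝ (⊤ : ℕ∞) f x) ∧
  ∀ (n : ℕ) (x : ℝ), 0 < x → 0 ≤ (-1 : ℝ) ^ n * iteratedDeriv n f x

/-- `f` is logarithmically completely monotonic on `(0,∞)`. -/
def LogCompletelyMonotonic (f : ℝ → ℝ) : Prop :=
  (∀ x : ℝ, 0 < x → 0 < f x) ∧ (∀ x : ℝ, 0 < x → ContDiffAt ℝ (⊤ : ℕ∞) f x) ∧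
  CompletelyMonotonic (fun x => -deriv f x / f x)

/-- `f` is a generalized Stieltjes function of order `lam` on `(0,∞)`. -/
def IsGenStieltjes (lam : ℝ) (f : ℝ → ℝ) : Prop :=
  ∃ (μ : Measure ℝ) (c : ℝ), 0 ≤ c ∧ μ (Set.Iio 0) = 0 ∧
    ∀ x : ℝ, 0 < x →
      Integrable (fun t => (x + t) ^ (-lam)) μ ∧
      f x = (∫ t, (x + t) ^ (-lam) ∂μ) + c

/-- Nielsen's beta function. -/
noncomputable def nielsenBeta (x : ℝ) : ℝ :=
  ∫ t in Set.Ioi (0:ℝ), Real.exp (-x * t) / (1 + Real.exp (-t))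


open scoped ComplexConjugate

theorem key_stoch {ι : Type} [Fintype ι] [DecidableEq ι] (a p : ι → ℝ) (hp : ∀ i, 0 < p i)
    (c : ℝ) (hc : 0 < c) {N : ℕ} (w : Fin N → ℂ) (hinj : Function.Injective w)
    (hne : ∀ j k, w j ≠ conj (w k)) (hpole : ∀ j i, w j ≠ (a i : ℂ))
    (hroot : ∀ j, (c : ℂ) + ∑ i, (p i : ℂ) / (w j - a i) ^ 2 = 0) :
    ∃ M : Fin N → ι → ℝ, (∀ j i, 0 ≤ M j i) ∧ (∀ j, ∑ i, M j i = 1) ∧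
      (∀ i, ∑ j, M j i ≤ 1) ∧ ∀ j, (w j).re = ∑ i, M j i * a i := by
  classical
  let v : Fin N → EuclideanSpace ℂ ι := fun j => WithLp.toLp 2 (fun i => (Real.sqrt (p i) : ℂ) / (w j - a i) ^ 2)
  have hv : ∀ j i, v j i = (Real.sqrt (p i) : ℂ) / (w j - a i) ^ 2 := fun j i => rfl
  let Z : Submodule ℂ (EuclideanSpace ℂ ι × EuclideanSpace ℂ ι) :=
    Submodule.span ℂ (Set.range fun j => (v j, w j • v j))
  have hZv : ∀ j, (v j, w j • v j) ∈ Z := fun j => Submodule.subset_span ⟨j, rfl⟩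
  -- the key identity on generators
  have hgen : ∀ j k, ∑ i, (conj (v j i) * (w k * v k i) + conj (w j * v j i) * v k i
      - 2 * a i * (conj (v j i) * v k i)) = 0 := by
    intro j k
    have h1 : ∑ i, (p i : ℂ) / (w k - a i) ^ 2 = -c := by
      linear_combination hroot k
    have h2 : ∑ i, (p i : ℂ) / (conj (w j) - a i) ^ 2 = -c := by
      have := congrArg conj (hroot j)
      simp only [map_add, map_sum, map_div₀, map_pow, map_sub, Complex.conj_ofReal, map_zero] at this
      linear_combination this
    have hd : w k - conj (w j) ≠ 0 := sub_ne_zero.mpr (hne k j)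
    have h3 : (w k - conj (w j)) * ∑ i, (conj (v j i) * (w k * v k i) + conj (w j * v j i) * v k i
      - 2 * a i * (conj (v j i) * v k i)) =
      ∑ i, (p i : ℂ) / (conj (w j) - a i) ^ 2 - ∑ i, (p i : ℂ) / (w k - a i) ^ 2 := by
      rw [Finset.mul_sum, ← Finset.sum_sub_distrib]
      refine Finset.sum_congr rfl fun i _ => ?_
      simp only [hv, map_div₀, map_pow, map_sub, Complex.conj_ofReal, map_mul]
      have e1 : w k - a i ≠ 0 := sub_ne_zero.mpr (hpole k i)
      have e2 : conj (w j) - a i ≠ 0 := by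
        have := hpole j i
        intro h
        apply this
        have h' := congrArg conj (sub_eq_zero.mp h)
        simpa using h'
      have e3 : ((Real.sqrt (p i) : ℝ) : ℂ) ^ 2 = p i := by
        rw [← Complex.ofReal_pow, Real.sq_sqrt (hp i).le]
      rw [← e3]
      field_simp
      ring
    rw [h1, h2, sub_self] at h3
    exact (mul_eq_zero.mp h3).resolve_left hd
  have hform : ∀ x ∈ Z, ∀ y ∈ Z, ∑ i, (conj (x.1 i) * y.2 i + conj (x.2 i) * y.1 i
      - 2 * a i * (conj (x.1 i) * y.1 i)) = 0 := by
    intro x hx y hy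
    induction hx, hy using Submodule.span_induction₂ with
    | mem_mem x y hx hy =>
      obtain ⟨j, rfl⟩ := hx
      obtain ⟨k, rfl⟩ := hy
      simpa using hgen j k
    | zero_left y hy => simp
    | zero_right x hx => simp
    | add_left x y z hx hy hz h1 h2 =>
      rw [← add_zero (0 : ℂ)]
      nth_rewrite 1 [← h1]
      rw [← h2, ← Finset.sum_add_distrib]
      refine Finset.sum_congr rfl fun i _ => ?_
      simp
      ring
    | add_right x y z hx hy hz h1 h2 =>
      rw [← add_zero (0 : ℂ)]
      nth_rewrite 1 [← h1]
      rw [← h2, ← Finset.sum_add_distrib]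
      refine Finset.sum_congr rfl fun i _ => ?_
      simp
      ring
    | smul_left r x y hx hy h =>
      rw [← mul_zero (conj r), ← h, Finset.mul_sum]
      refine Finset.sum_congr rfl fun i _ => ?_
      simp
      ring
    | smul_right r x y hx hy h =>
      rw [← mul_zero r, ← h, Finset.mul_sum]
      refine Finset.sum_congr rfl fun i _ => ?_
      simp
      ring
  -- second components lie in the span of first components
  have hsnd : ∀ x ∈ Z, ∃ y, (x.2, y) ∈ Z := by
    intro x hx
    induction hx using Submodule.span_induction with
    | mem x hx =>
      obtain ⟨j, rfl⟩ := hx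
      refine ⟨w j • w j • v j, ?_⟩
      have := Z.smul_mem (w j) (hZv j)
      simpa using this
    | zero => exact ⟨0, Z.zero_mem⟩
    | add x y hx hy h1 h2 =>
      obtain ⟨u, hu⟩ := h1
      obtain ⟨u', hu'⟩ := h2
      exact ⟨u + u', by simpa using Z.add_mem hu hu'⟩
    | smul r x hx h =>
      obtain ⟨u, hu⟩ := h
      exact ⟨r • u, by simpa using Z.smul_mem r hu⟩
  have hgraph : ∀ y, ((0 : EuclideanSpace ℂ ι), y) ∈ Z → y = 0 := by
    intro y hy
    obtain ⟨y', hy'⟩ := hsnd _ hy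
    have := hform _ hy _ hy'
    simp only [PiLp.zero_apply, map_zero, zero_mul, mul_zero, sub_zero, zero_add] at this
    have h2 : inner ℂ y y = 0 := by
      rw [PiLp.inner_apply]
      rw [← this]
      refine Finset.sum_congr rfl fun i _ => ?_
      rw [RCLike.inner_apply, mul_comm]
    exact inner_self_eq_zero.mp h2
  have hli : LinearIndependent ℂ v := by
    rw [Fintype.linearIndependent_iff]
    intro g hg
    have hpw : ∀ m : ℕ, ∑ j, (g j * w j ^ m) • v j = 0 := by
      intro m
      induction m with
      | zero => simpa using hg
      | succ m ih =>
        apply hgraph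
        have : ∑ j, (g j * w j ^ m) • (v j, w j • v j) ∈ Z :=
          Z.sum_mem fun j _ => Z.smul_mem _ (hZv j)
        convert this using 1
        ext1
        · simp [Prod.fst_sum, ih]
        · simp [Prod.snd_sum, smul_smul, pow_succ, mul_assoc]
    intro j
    have hι : Nonempty ι := by
      by_contra hemp
      rw [not_nonempty_iff] at hemp
      have := hroot j
      simp at this
      exact hc.ne' this
    obtain ⟨i⟩ := hι
    have h0 : (fun j => g j * v j i) = 0 := by
      apply Matrix.eq_zero_of_forall_pow_sum_mul_pow_eq_zero hinj
      intro m
      have := congrArg (fun z : EuclideanSpace ℂ ι => z i) (hpw m)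
      simp only [WithLp.ofLp_sum, Finset.sum_apply, PiLp.smul_apply, smul_eq_mul, PiLp.zero_apply] at this
      rw [← this]
      exact Finset.sum_congr rfl fun j _ => by ring
    have h1 := congrFun h0 j
    simp only [Pi.zero_apply, mul_eq_zero] at h1
    refine h1.resolve_right ?_
    rw [hv]
    refine div_ne_zero ?_ (pow_ne_zero _ (sub_ne_zero.mpr (hpole j i)))
    exact_mod_cast (Real.sqrt_pos.mpr (hp i)).ne'
  let u : Fin N → EuclideanSpace ℂ ι := InnerProductSpace.gramSchmidtNormed ℂ v
  have hu : Orthonormal ℂ u := InnerProductSpace.gramSchmidtNormed_orthonormal hli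
  have hspan : ∀ j, u j ∈ Submodule.span ℂ (v '' Set.Iic j) := by
    intro j
    exact Submodule.smul_mem _ _ (InnerProductSpace.gramSchmidt_mem_span ℂ v le_rfl)
  have hperp : ∀ j, ∀ y ∈ Submodule.span ℂ (v '' Set.Iio j), inner ℂ (u j) y = 0 := by
    intro j y hy
    induction hy using Submodule.span_induction with
    | mem x hx =>
      obtain ⟨k, hk, rfl⟩ := hx
      have := InnerProductSpace.gramSchmidt_inv_triangular ℂ v (show k < j from hk)
      simp [u, InnerProductSpace.gramSchmidtNormed, this]
    | zero => simp
    | add x y hx hy h1 h2 => rw [inner_add_right, h1, h2, add_zero]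
    | smul r x hx h => rw [inner_smul_right, h, mul_zero]
  have hXu : ∀ j, ∃ y, (u j, y) ∈ Z ∧ y - w j • u j ∈ Submodule.span ℂ (v '' Set.Iio j) := by
    intro j
    have hs := hspan j
    generalize u j = z at hs ⊢
    induction hs using Submodule.span_induction with
    | mem x hx =>
      obtain ⟨k, hk, rfl⟩ := hx
      refine ⟨w k • v k, hZv k, ?_⟩
      rcases (show k ≤ j from hk).eq_or_lt with h | h
      · subst h; simp
      · rw [← sub_smul]
        exact Submodule.smul_mem _ _ (Submodule.subset_span ⟨k, h, rfl⟩)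
    | zero => exact ⟨0, Z.zero_mem, by simp⟩
    | add x y hx hy h1 h2 =>
      obtain ⟨x', hx1, hx2⟩ := h1
      obtain ⟨y', hy1, hy2⟩ := h2
      refine ⟨x' + y', Z.add_mem hx1 hy1, ?_⟩
      convert Submodule.add_mem _ hx2 hy2 using 1
      rw [smul_add]; abel
    | smul r x hx h =>
      obtain ⟨x', hx1, hx2⟩ := h
      refine ⟨r • x', Z.smul_mem r hx1, ?_⟩
      convert Submodule.smul_mem _ r hx2 using 1
      rw [smul_sub, smul_comm]
  refine ⟨fun j i => ‖u j i‖ ^ 2, fun j i => by positivity, ?_, ?_, ?_⟩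
  · intro j
    rw [← EuclideanSpace.norm_sq_eq, hu.1 j, one_pow]
  · intro i
    have := hu.sum_inner_products_le (EuclideanSpace.single i (1 : ℂ)) (s := Finset.univ)
    simpa [EuclideanSpace.inner_single_right] using this
  · intro j
    obtain ⟨y, hy, hy2⟩ := hXu j
    have h1 : inner ℂ (u j) y = w j := by
      have := hperp j _ hy2
      rw [inner_sub_right, inner_smul_right, inner_self_eq_norm_sq_to_K, hu.1 j] at this
      simpa [sub_eq_zero] using this
    have h2 : inner ℂ y (u j) = conj (w j) := by
      rw [← h1, inner_conj_symm]
    have h3 := hform _ hy _ hy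
    have h4 : w j + conj (w j) = 2 * ((∑ i, ‖u j i‖ ^ 2 * a i : ℝ) : ℂ) := by
      rw [Finset.sum_sub_distrib, Finset.sum_add_distrib, sub_eq_zero] at h3
      rw [← h1]
      nth_rewrite 1 [h1]
      rw [← h1, inner_conj_symm, PiLp.inner_apply, PiLp.inner_apply]
      push_cast
      rw [Finset.mul_sum]
      convert h3 using 1
      · simp [mul_comm]
      · refine Finset.sum_congr rfl fun i _ => ?_
        have : conj (u j i) * u j i = (‖u j i‖ : ℂ) ^ 2 := Complex.conj_mul' _
        simp only [this]
        ring
    rw [Complex.add_conj] at h4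
    have h5 : (2 * (w j).re) = 2 * ∑ i, ‖u j i‖ ^ 2 * a i := by exact_mod_cast h4
    linarith

theorem key_ineq (T : Finset ℝ) (p : ℝ → ℝ) (ht : ∀ t ∈ T, 0 ≤ t) (hp : ∀ t ∈ T, 0 < p t)
    (c : ℝ) (hc : 0 < c) (S : Finset ℂ) (hne : ∀ z ∈ S, ∀ z' ∈ S, z ≠ conj z')
    (hpole : ∀ z ∈ S, ∀ t ∈ T, z + (t : ℂ) ≠ 0)
    (hroot : ∀ z ∈ S, (c : ℂ) + ∑ t ∈ T, (p t : ℂ) / (z + t) ^ 2 = 0) (x : ℝ) (hx : 0 < x) (k : ℕ) :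
    ∑ z ∈ S, (‖(x : ℂ) - z‖ ^ k)⁻¹ ≤ ∑ t ∈ T, ((x + t) ^ k)⁻¹ := by
  classical
  let e := S.equivFin
  let w : Fin S.card → ℂ := fun j => (e.symm j : ℂ)
  have hw : ∀ j, w j ∈ S := fun j => (e.symm j).2
  obtain ⟨M, hM0, hM1, hM2, hM3⟩ := key_stoch (ι := T) (fun t => -(t : ℝ)) (fun t => p t)
    (fun t => hp t t.2) c hc w (Subtype.val_injective.comp e.symm.injective)
    (fun j k => hne _ (hw j) _ (hw k))
    (fun j t h => hpole _ (hw j) t t.2 (by rw [h]; simp))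
    (fun j => by
      have := hroot _ (hw j)
      rw [← Finset.sum_coe_sort] at this
      simpa using this)
  have hsum : ∑ z ∈ S, (‖(x : ℂ) - z‖ ^ k)⁻¹ = ∑ j, (‖(x : ℂ) - w j‖ ^ k)⁻¹ := by
    rw [← Finset.sum_coe_sort]
    exact (Equiv.sum_comp e.symm (fun z : S => (‖(x : ℂ) - z‖ ^ k)⁻¹)).symm
  rw [hsum, ← Finset.sum_coe_sort T]
  have hpos : ∀ t : T, 0 < x + (t : ℝ) := fun t => by have := ht t t.2; linarith
  have hj : ∀ j, (‖(x : ℂ) - w j‖ ^ k)⁻¹ ≤ ∑ t : T, M j t * ((x + t) ^ k)⁻¹ := by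
    intro j
    have h1 : ∑ t : T, M j t * (x + t) = x - (w j).re := by
      rw [hM3 j]
      simp only [mul_add, Finset.sum_add_distrib, ← Finset.sum_mul, hM1 j, mul_neg, Finset.sum_neg_distrib]
      ring
    have h2 : x ≤ ∑ t : T, M j t * (x + t) := by
      calc x = ∑ t : T, M j t * x := by rw [← Finset.sum_mul, hM1, one_mul]
        _ ≤ _ := Finset.sum_le_sum fun t _ => by
          have := ht t t.2
          exact mul_le_mul_of_nonneg_left (by linarith) (hM0 j t)
    have h3 : ∑ t : T, M j t * (x + t) ≤ ‖(x : ℂ) - w j‖ := by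
      rw [h1]
      have := Complex.re_le_norm ((x : ℂ) - w j)
      simpa using this
    have h4 := (convexOn_zpow (𝕜 := ℝ) (-(k : ℤ))).map_sum_le (t := Finset.univ) (w := M j)
      (p := fun t : T => x + (t : ℝ)) (fun t _ => hM0 j t) (hM1 j) (fun t _ => hpos t)
    simp only [smul_eq_mul, zpow_neg, zpow_natCast] at h4
    refine le_trans ?_ h4
    have h5 : 0 < ∑ t : T, M j t * (x + t) := by linarith
    gcongr
  calc _ ≤ ∑ j, ∑ t : T, M j t * ((x + t) ^ k)⁻¹ := Finset.sum_le_sum fun j _ => hj j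
    _ = ∑ t : T, (∑ j, M j t) * ((x + t) ^ k)⁻¹ := by
      rw [Finset.sum_comm]; simp only [Finset.sum_mul]
    _ ≤ _ := Finset.sum_le_sum fun t _ => by
      have := hpos t
      exact mul_le_of_le_one_left (by positivity) (hM2 t)

theorem key_ineq2 (T : Finset ℝ) (p : ℝ → ℝ) (ht : ∀ t ∈ T, 0 ≤ t) (hp : ∀ t ∈ T, 0 < p t)
    (c : ℝ) (hc : 0 < c) (S : Finset ℂ)
    (hpole : ∀ z ∈ S, ∀ t ∈ T, z + (t : ℂ) ≠ 0)
    (hroot : ∀ z ∈ S, (c : ℂ) + ∑ t ∈ T, (p t : ℂ) / (z + t) ^ 2 = 0) (x : ℝ) (hx : 0 < x) (k : ℕ) :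
    ∑ z ∈ S, (‖(x : ℂ) - z‖ ^ k)⁻¹ ≤ 2 * ∑ t ∈ T, ((x + t) ^ k)⁻¹ := by
  classical
  have him : ∀ z ∈ S, z.im ≠ 0 := by
    intro z hz h
    have hzr : z = (z.re : ℂ) := Complex.ext rfl (by simpa using h)
    have := hroot z hz
    rw [hzr] at this
    have h2 : c + ∑ t ∈ T, p t / (z.re + t) ^ 2 = 0 := by exact_mod_cast this
    have h3 : 0 ≤ ∑ t ∈ T, p t / (z.re + t) ^ 2 :=
      Finset.sum_nonneg fun t h => div_nonneg (hp t h).le (sq_nonneg _)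
    linarith
  rw [← Finset.sum_filter_add_sum_filter_not S (fun z => 0 < z.im), two_mul]
  apply add_le_add
  · apply key_ineq T p ht hp c hc _ _ _ _ x hx
    · intro z hz z' hz' h
      have h1 := (Finset.mem_filter.mp hz).2
      have h2 := (Finset.mem_filter.mp hz').2
      rw [h, Complex.conj_im] at h1
      linarith
    · exact fun z hz => hpole z (Finset.mem_filter.mp hz).1
    · exact fun z hz => hroot z (Finset.mem_filter.mp hz).1
  · apply key_ineq T p ht hp c hc _ _ _ _ x hx
    · intro z hz z' hz' h
      have h1 := (Finset.mem_filter.mp hz)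
      have h2 := (Finset.mem_filter.mp hz')
      have h3 := him z h1.1
      have h4 := h1.2
      rw [h, Complex.conj_im] at h4 h3
      have h5 := h2.2
      rcases lt_trichotomy z'.im 0 with h | h | h
      · exact h4 (by linarith)
      · exact h3 (by linarith)
      · exact h5 h
    · exact fun z hz => hpole z (Finset.mem_filter.mp hz).1
    · exact fun z hz => hroot z (Finset.mem_filter.mp hz).1

theorem chain_iter (F : ℕ → ℝ → ℝ)
    (hF : ∀ k x, 0 < x → HasDerivAt (F k) (F (k + 1) x) x) (m : ℕ) :
    ∀ x, 0 < x → iteratedDeriv m (F 0) x = F m x := by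
  induction m with
  | zero => intro x hx; simp
  | succ m ih =>
    intro x hx
    rw [iteratedDeriv_succ]
    have : iteratedDeriv m (F 0) =ᶠ[nhds x] F m := by
      filter_upwards [Ioi_mem_nhds hx] with y hy using ih y hy
    rw [this.deriv_eq]
    exact (hF m x hx).deriv

theorem chain_smooth (F : ℕ → ℝ → ℝ)
    (hF : ∀ k x, 0 < x → HasDerivAt (F k) (F (k + 1) x) x) (x : ℝ) (hx : 0 < x) (k : ℕ) :
    ContDiffAt ℝ (⊤ : ℕ∞) (F k) x := by
  have h : ∀ n : ℕ, ∀ k, ContDiffOn ℝ n (F k) (Ioi 0) := by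
    intro n
    induction n with
    | zero =>
      intro k
      rw [Nat.cast_zero, contDiffOn_zero]
      exact fun y hy => (hF k y hy).continuousAt.continuousWithinAt
    | succ n ih =>
      intro k
      rw [Nat.cast_succ, contDiffOn_succ_iff_deriv_of_isOpen isOpen_Ioi]
      refine ⟨fun y hy => (hF k y hy).differentiableAt.differentiableWithinAt, by simp, ?_⟩
      exact (ih (k + 1)).congr fun y hy => (hF k y hy).deriv
  have h2 : ContDiffOn ℝ (⊤ : ℕ∞) (F k) (Ioi 0) := contDiffOn_infty.2 fun n => h n k
  exact h2.contDiffAt (Ioi_mem_nhds hx)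

/-- The successive derivatives of `-f'/f` expressed through the derivatives `y` of `f`. -/
noncomputable def Hrec (y : ℕ → ℝ) : ℕ → ℝ
  | m => (-y (m + 1) - ∑ k : Fin m, (m.choose k : ℝ) * Hrec y k * y (m - k)) / y 0
termination_by m => m
decreasing_by exact k.2

theorem Hrec_congr (y z : ℕ → ℝ) (m : ℕ) (h : ∀ k, k ≤ m + 1 → y k = z k) :
    Hrec y m = Hrec z m := by
  induction m using Nat.strong_induction_on with
  | _ m ih =>
    rw [Hrec, Hrec, h (m + 1) le_rfl, h 0 (by omega)]
    congr 2
    refine Finset.sum_congr rfl fun k _ => ?_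
    rw [ih k k.2 (fun j hj => h j (by omega)), h (m - k) (by omega)]

theorem Hrec_continuousAt (m : ℕ) (y : ℕ → ℝ) (hy : y 0 ≠ 0) :
    ContinuousAt (fun z : ℕ → ℝ => Hrec z m) y := by
  induction m using Nat.strong_induction_on with
  | _ m ih =>
    have : (fun z : ℕ → ℝ => Hrec z m) = fun z : ℕ → ℝ =>
        (-z (m + 1) - ∑ k : Fin m, (m.choose k : ℝ) * Hrec z k * z (m - k)) / z 0 := by
      funext z; rw [Hrec]
    rw [this]
    have hap : ∀ j, ContinuousAt (fun z : ℕ → ℝ => z j) y := fun j => (continuous_apply j).continuousAt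
    refine ContinuousAt.div ?_ (hap 0) hy
    refine ContinuousAt.sub (hap _).neg ?_
    refine tendsto_finsetSum _ fun k _ => ?_
    exact (continuousAt_const.mul (ih k k.2)).mul (hap _)

theorem chain_ratio_smooth (F : ℕ → ℝ → ℝ)
    (hF : ∀ k x, 0 < x → HasDerivAt (F k) (F (k + 1) x) x) (x : ℝ) (hx : 0 < x)
    (h0 : F 0 x ≠ 0) : ContDiffAt ℝ (⊤ : ℕ∞) (fun x => -F 1 x / F 0 x) x :=
  (chain_smooth F hF x hx 1).neg.div (chain_smooth F hF x hx 0) h0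

theorem chain_ratio_iter (F : ℕ → ℝ → ℝ)
    (hF : ∀ k x, 0 < x → HasDerivAt (F k) (F (k + 1) x) x)
    (h0 : ∀ x, 0 < x → F 0 x ≠ 0) (m : ℕ) (x : ℝ) (hx : 0 < x) :
    iteratedDeriv m (fun x => -F 1 x / F 0 x) x = Hrec (fun k => F k x) m := by
  induction m using Nat.strong_induction_on with
  | _ m ih =>
    have e1 : iteratedDeriv m ((fun x => -F 1 x / F 0 x) * F 0) x = - F (m + 1) x := by
      have : ((fun x => -F 1 x / F 0 x) * F 0) =ᶠ[nhds x] (fun x => - F 1 x) := by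
        filter_upwards [Ioi_mem_nhds hx] with y hy
        simp only [Pi.mul_apply]
        rw [div_mul_cancel₀ _ (h0 y hy)]
      rw [this.iteratedDeriv_eq]
      rw [chain_iter (fun k x => - F (k + 1) x) (fun k x hx => (hF (k + 1) x hx).neg) m x hx]
    have hle : ((m : ℕ∞) : WithTop ℕ∞) ≤ ((⊤ : ℕ∞) : WithTop ℕ∞) := by exact_mod_cast le_top
    rw [iteratedDeriv_mul ((chain_ratio_smooth F hF x hx (h0 x hx)).of_le hle)
      ((chain_smooth F hF x hx 0).of_le hle), Finset.sum_range_succ] at e1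
    rw [Hrec, eq_div_iff (h0 x hx), ← e1, Finset.sum_range]
    simp only [Nat.choose_self, Nat.sub_self, iteratedDeriv_zero, Nat.cast_one, one_mul]
    rw [eq_sub_iff_add_eq, add_comm]
    congr 1
    refine Finset.sum_congr rfl fun k _ => ?_
    rw [ih k k.2, chain_iter F hF _ x hx]

/-- The numerator polynomial of `c + ∑ p t / (z + t) ^ 2`. -/
noncomputable def numPoly (T : Finset ℝ) (p : ℝ → ℝ) (c : ℝ) : Polynomial ℂ :=
  Polynomial.C (c : ℂ) * ∏ t ∈ T, (Polynomial.X + Polynomial.C (t : ℂ)) ^ 2 +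
    ∑ t ∈ T, Polynomial.C (p t : ℂ) * ∏ s ∈ T.erase t, (Polynomial.X + Polynomial.C (s : ℂ)) ^ 2

theorem numPoly_eval (T : Finset ℝ) (p : ℝ → ℝ) (c : ℝ) (z : ℂ) (hz : ∀ t ∈ T, z + (t : ℂ) ≠ 0) :
    (numPoly T p c).eval z =
      (∏ t ∈ T, (z + t) ^ 2) * ((c : ℂ) + ∑ t ∈ T, (p t : ℂ) / (z + t) ^ 2) := by
  simp only [numPoly, Polynomial.eval_add, Polynomial.eval_mul, Polynomial.eval_C,
    Polynomial.eval_prod, Polynomial.eval_pow, Polynomial.eval_X, Polynomial.eval_finsetSum]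
  rw [mul_add, mul_comm, Finset.mul_sum]
  congr 1
  refine Finset.sum_congr rfl fun t ht => ?_
  rw [← Finset.mul_prod_erase T _ ht]
  have := hz t ht
  field_simp

theorem numPoly_pole (T : Finset ℝ) (p : ℝ → ℝ) (hp : ∀ t ∈ T, 0 < p t) (c : ℝ) (t : ℝ)
    (ht : t ∈ T) : (numPoly T p c).eval (-(t : ℂ)) ≠ 0 := by
  simp only [numPoly, Polynomial.eval_add, Polynomial.eval_mul, Polynomial.eval_C,
    Polynomial.eval_prod, Polynomial.eval_pow, Polynomial.eval_X, Polynomial.eval_finsetSum]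
  rw [Finset.prod_eq_zero ht (by simp), mul_zero, zero_add, Finset.sum_eq_single_of_mem t ht]
  · refine mul_ne_zero (by exact_mod_cast (hp t ht).ne') (Finset.prod_ne_zero_iff.mpr ?_)
    intro s hs
    refine pow_ne_zero _ ?_
    rw [neg_add_eq_sub, sub_ne_zero]
    exact_mod_cast (Finset.mem_erase.mp hs).1
  · intro s hs hst
    rw [Finset.prod_eq_zero (Finset.mem_erase.mpr ⟨hst.symm, ht⟩) (by simp), mul_zero]

theorem numPoly_root_pole (T : Finset ℝ) (p : ℝ → ℝ) (hp : ∀ t ∈ T, 0 < p t) (c : ℝ) (z : ℂ)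
    (hz : (numPoly T p c).eval z = 0) : ∀ t ∈ T, z + (t : ℂ) ≠ 0 := by
  intro t ht h
  rw [eq_neg_of_add_eq_zero_left h] at hz
  exact numPoly_pole T p hp c t ht hz

theorem numPoly_root (T : Finset ℝ) (p : ℝ → ℝ) (hp : ∀ t ∈ T, 0 < p t) (c : ℝ) (z : ℂ)
    (hz : (numPoly T p c).eval z = 0) : (c : ℂ) + ∑ t ∈ T, (p t : ℂ) / (z + t) ^ 2 = 0 := by
  have hpole := numPoly_root_pole T p hp c z hz
  rw [numPoly_eval T p c z hpole] at hz
  refine (mul_eq_zero.mp hz).resolve_left (Finset.prod_ne_zero_iff.mpr fun t ht => ?_)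
  exact pow_ne_zero _ (hpole t ht)

theorem numPoly_pos (T : Finset ℝ) (p : ℝ → ℝ) (_ht : ∀ t ∈ T, 0 ≤ t) (hp : ∀ t ∈ T, 0 < p t)
    (c : ℝ) (hc : 0 < c) (x : ℝ) (_hx : 0 < x) : (numPoly T p c).eval (x : ℂ) ≠ 0 := by
  intro h
  have := numPoly_root T p hp c x h
  have h2 : c + ∑ t ∈ T, p t / (x + t) ^ 2 = 0 := by exact_mod_cast this
  have h3 : 0 ≤ ∑ t ∈ T, p t / (x + t) ^ 2 :=
    Finset.sum_nonneg fun t h => div_nonneg (hp t h).le (sq_nonneg _)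
  linarith

theorem frac_hasDeriv (T : Finset ℝ) (p : ℝ → ℝ) (c : ℝ) (z : ℂ)
    (hz : ∀ t ∈ T, z + (t : ℂ) ≠ 0) :
    HasDerivAt (fun z : ℂ => (c : ℂ) + ∑ t ∈ T, (p t : ℂ) / (z + t) ^ 2)
      (∑ t ∈ T, -2 * ((p t : ℂ) / (z + t) ^ 3)) z := by
  refine HasDerivAt.const_add _ (HasDerivAt.fun_sum fun t ht => ?_)
  have h1 : HasDerivAt (fun z : ℂ => z + (t : ℂ)) 1 z := (hasDerivAt_id z).add_const _
  have h2 := (hasDerivAt_const z (p t : ℂ)).div (h1.pow 2) (pow_ne_zero 2 (hz t ht))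
  refine h2.congr_deriv ?_
  have := hz t ht
  simp
  field_simp

theorem numPoly_nhds (T : Finset ℝ) (p : ℝ → ℝ) (c : ℝ) (z : ℂ)
    (hz : ∀ t ∈ T, z + (t : ℂ) ≠ 0) :
    (fun z => (numPoly T p c).eval z) =ᶠ[nhds z] fun z =>
      (∏ t ∈ T, (z + t) ^ 2) * ((c : ℂ) + ∑ t ∈ T, (p t : ℂ) / (z + t) ^ 2) := by
  have : ∀ᶠ y in nhds z, ∀ t ∈ T, y + (t : ℂ) ≠ 0 := by
    rw [Filter.eventually_all_finset]
    intro t ht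
    exact (continuous_id.add continuous_const).continuousAt.eventually_ne (hz t ht)
  filter_upwards [this] with y hy using numPoly_eval T p c y hy

theorem numPoly_nodup (T : Finset ℝ) (p : ℝ → ℝ) (ht : ∀ t ∈ T, 0 ≤ t) (hp : ∀ t ∈ T, 0 < p t)
    (c : ℝ) (hc : 0 < c)
    (hgood : ∀ z : ℂ, (∀ t ∈ T, z + (t : ℂ) ≠ 0) →
      (c : ℂ) + ∑ t ∈ T, (p t : ℂ) / (z + t) ^ 2 = 0 → ∑ t ∈ T, (p t : ℂ) / (z + t) ^ 3 ≠ 0) :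
    (numPoly T p c).roots.Nodup := by
  classical
  have h0 : numPoly T p c ≠ 0 := by
    intro h
    have := numPoly_pos T p ht hp c hc 1 one_pos
    simp [h] at this
  rw [Multiset.nodup_iff_count_le_one]
  intro z
  by_contra hcon
  rw [not_le, Polynomial.count_roots, Polynomial.one_lt_rootMultiplicity_iff_isRoot h0] at hcon
  obtain ⟨h1, h2⟩ := hcon
  have hpole := numPoly_root_pole T p hp c z h1
  have hr := numPoly_root T p hp c z h1
  apply hgood z hpole hr
  have hd := (numPoly T p c).hasDerivAt z
  rw [h2] at hd
  have hd2 := hd.congr_of_eventuallyEq (numPoly_nhds T p c z hpole).symm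
  have hD : DifferentiableAt ℂ (fun z : ℂ => ∏ t ∈ T, (z + (t : ℂ)) ^ 2) z := by fun_prop
  have hd3 := (hD.hasDerivAt.mul (frac_hasDeriv T p c z hpole)).unique hd2
  rw [hr, mul_zero, zero_add, ← Finset.mul_sum] at hd3
  have hDne : ∏ t ∈ T, (z + (t : ℂ)) ^ 2 ≠ 0 :=
    Finset.prod_ne_zero_iff.mpr fun t ht => pow_ne_zero _ (hpole t ht)
  have := (mul_eq_zero.mp hd3).resolve_left hDne
  simpa using this

theorem good_finite (T : Finset ℝ) (p : ℝ → ℝ) (ht : ∀ t ∈ T, 0 ≤ t) (hp : ∀ t ∈ T, 0 < p t)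
    (hT : T.Nonempty) :
    ∃ B : Set ℝ, B.Finite ∧ ∀ c ∉ B, ∀ z : ℂ, (∀ t ∈ T, z + (t : ℂ) ≠ 0) →
      (c : ℂ) + ∑ t ∈ T, (p t : ℂ) / (z + t) ^ 2 = 0 → ∑ t ∈ T, (p t : ℂ) / (z + t) ^ 3 ≠ 0 := by
  classical
  let R : Polynomial ℂ :=
    ∑ t ∈ T, Polynomial.C (p t : ℂ) * ∏ s ∈ T.erase t, (Polynomial.X + Polynomial.C (s : ℂ)) ^ 3
  have hR : ∀ z : ℂ, (∀ t ∈ T, z + (t : ℂ) ≠ 0) →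
      R.eval z = (∏ t ∈ T, (z + (t : ℂ)) ^ 3) * ∑ t ∈ T, (p t : ℂ) / (z + t) ^ 3 := by
    intro z hz
    simp only [R, Polynomial.eval_add, Polynomial.eval_mul, Polynomial.eval_C,
      Polynomial.eval_prod, Polynomial.eval_pow, Polynomial.eval_X, Polynomial.eval_finsetSum]
    rw [Finset.mul_sum]
    refine Finset.sum_congr rfl fun t ht => ?_
    rw [← Finset.mul_prod_erase T _ ht]
    have := hz t ht
    field_simp
  have hR0 : R ≠ 0 := by
    intro h
    have hpos : ∀ t ∈ T, (0 : ℝ) < 1 + t := fun t h => by have := ht t h; linarith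
    have hne : ∀ t ∈ T, (1 : ℂ) + (t : ℂ) ≠ 0 := fun t h => by exact_mod_cast (hpos t h).ne'
    have h1 := hR 1 hne
    rw [h, Polynomial.eval_zero] at h1
    have h2 := (mul_eq_zero.mp h1.symm).resolve_left
      (Finset.prod_ne_zero_iff.mpr fun t ht => pow_ne_zero _ (hne t ht))
    have h3 : ∑ t ∈ T, p t / (1 + t) ^ 3 = 0 := by exact_mod_cast h2
    have h4 : 0 < ∑ t ∈ T, p t / (1 + t) ^ 3 :=
      Finset.sum_pos (fun t h => div_pos (hp t h) (pow_pos (hpos t h) 3)) hT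
    linarith
  refine ⟨(fun z : ℂ => -(∑ t ∈ T, (p t : ℂ) / (z + t) ^ 2).re) '' (R.roots.toFinset : Set ℂ),
    (Finset.finite_toSet _).image _, ?_⟩
  intro c hc z hz h1 h2
  apply hc
  refine ⟨z, ?_, ?_⟩
  · simp only [Finset.mem_coe, Multiset.mem_toFinset, Polynomial.mem_roots hR0, Polynomial.IsRoot]
    rw [hR z hz, h2, mul_zero]
  · have := congrArg Complex.re h1
    simp only [Complex.add_re, Complex.ofReal_re, Complex.zero_re] at this
    simp only
    linarith

/-- The derivatives of `c + ∫ (x + t) ^ (-2)` in terms of the moments `I k`. -/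
noncomputable def Yseq (c : ℝ) (I : ℕ → ℝ) (k : ℕ) : ℝ :=
  (-1) ^ k * ((k + 1).factorial : ℝ) * I k + if k = 0 then c else 0

theorem inv_pow_hasDeriv (t x : ℝ) (h : x + t ≠ 0) (k : ℕ) :
    HasDerivAt (fun x : ℝ => ((x + t) ^ (k + 1))⁻¹) (-((k : ℝ) + 1) * ((x + t) ^ (k + 2))⁻¹) x := by
  have h1 : HasDerivAt (fun x : ℝ => x + t) 1 x := (hasDerivAt_id x).add_const _
  refine ((h1.pow (k + 1)).inv (pow_ne_zero _ h)).congr_deriv ?_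
  push_cast
  simp
  field_simp
  ring

theorem Yseq_hasDeriv (c : ℝ) (I : ℕ → ℝ → ℝ)
    (hI : ∀ k x, 0 < x → HasDerivAt (I k) (-((k : ℝ) + 2) * I (k + 1) x) x) (k : ℕ) (x : ℝ)
    (hx : 0 < x) :
    HasDerivAt (fun x => Yseq c (fun k => I k x) k) (Yseq c (fun k => I k x) (k + 1)) x := by
  unfold Yseq
  refine (((hI k x hx).const_mul ((-1) ^ k * ((k + 1).factorial : ℝ))).add_const
    (if k = 0 then c else 0)).congr_deriv ?_
  rw [Nat.factorial_succ (k + 1)]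
  simp
  ring

theorem disc_hasDeriv (T : Finset ℝ) (p : ℝ → ℝ) (ht : ∀ t ∈ T, 0 ≤ t) (k : ℕ) (x : ℝ)
    (hx : 0 < x) :
    HasDerivAt (fun x => ∑ t ∈ T, p t * ((x + t) ^ (k + 2))⁻¹)
      (-((k : ℝ) + 2) * ∑ t ∈ T, p t * ((x + t) ^ (k + 1 + 2))⁻¹) x := by
  rw [Finset.mul_sum]
  refine HasDerivAt.fun_sum fun t h => ?_
  have h1 := ht t h
  refine ((inv_pow_hasDeriv t x (by linarith) (k + 1)).const_mul (p t)).congr_deriv ?_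
  push_cast
  ring

/-- Derivatives of the logarithmic derivative of the rational function. -/
noncomputable def Qseq (T : Finset ℝ) (S : Finset ℂ) (k : ℕ) (x : ℝ) : ℝ :=
  (-1) ^ k * (k.factorial : ℝ) * (2 * ∑ t ∈ T, ((x + t) ^ (k + 1))⁻¹
    - ∑ r ∈ S, ((((x : ℂ) - r) ^ (k + 1))⁻¹).re)

theorem Qseq_hasDeriv (T : Finset ℝ) (ht : ∀ t ∈ T, 0 ≤ t) (S : Finset ℂ)
    (hS : ∀ r ∈ S, ∀ x : ℝ, 0 < x → (x : ℂ) - r ≠ 0) (k : ℕ) (x : ℝ) (hx : 0 < x) :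
    HasDerivAt (Qseq T S k) (Qseq T S (k + 1) x) x := by
  unfold Qseq
  have h1 : HasDerivAt (fun x : ℝ => ∑ t ∈ T, ((x + t) ^ (k + 1))⁻¹)
      (∑ t ∈ T, -((k : ℝ) + 1) * ((x + t) ^ (k + 2))⁻¹) x :=
    HasDerivAt.fun_sum fun t h => inv_pow_hasDeriv t x (by have := ht t h; linarith) k
  have h2 : HasDerivAt (fun x : ℝ => ∑ r ∈ S, ((((x : ℂ) - r) ^ (k + 1))⁻¹).re)
      (∑ r ∈ S, -((k : ℝ) + 1) * ((((x : ℂ) - r) ^ (k + 2))⁻¹).re) x := by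
    refine HasDerivAt.fun_sum fun r hr => ?_
    have h3 : HasDerivAt (fun z : ℂ => z - r) 1 (x : ℂ) := (hasDerivAt_id _).sub_const _
    have h0 := hS r hr x hx
    have h4 : HasDerivAt (fun z : ℂ => ((z - r) ^ (k + 1))⁻¹)
        (((-((k : ℝ) + 1) : ℝ) : ℂ) * (((x : ℂ) - r) ^ (k + 2))⁻¹) (x : ℂ) := by
      refine ((h3.pow (k + 1)).inv (pow_ne_zero _ h0)).congr_deriv ?_
      push_cast
      simp
      field_simp
      ring
    have h5 := h4.real_of_complex
    rwa [Complex.re_ofReal_mul] at h5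
  refine (((h1.const_mul 2).sub h2).const_mul ((-1) ^ k * (k.factorial : ℝ))).congr_deriv ?_
  rw [← Finset.mul_sum, ← Finset.mul_sum, Nat.factorial_succ]
  push_cast
  ring

theorem disc_good (T : Finset ℝ) (p : ℝ → ℝ) (ht : ∀ t ∈ T, 0 ≤ t) (hp : ∀ t ∈ T, 0 < p t)
    (c : ℝ) (hc : 0 < c)
    (hgood : ∀ z : ℂ, (∀ t ∈ T, z + (t : ℂ) ≠ 0) →
      (c : ℂ) + ∑ t ∈ T, (p t : ℂ) / (z + t) ^ 2 = 0 → ∑ t ∈ T, (p t : ℂ) / (z + t) ^ 3 ≠ 0)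
    (m : ℕ) (x : ℝ) (hx : 0 < x) :
    0 ≤ (-1) ^ m * Hrec (Yseq c fun k => ∑ t ∈ T, p t * ((x + t) ^ (k + 2))⁻¹) m := by
  classical
  set I : ℕ → ℝ → ℝ := fun k x => ∑ t ∈ T, p t * ((x + t) ^ (k + 2))⁻¹ with hI
  set F : ℕ → ℝ → ℝ := fun k x => Yseq c (fun k => I k x) k with hF
  have hFd : ∀ k x, 0 < x → HasDerivAt (F k) (F (k + 1) x) x := fun k x hx =>
    Yseq_hasDeriv c I (fun k x hx => disc_hasDeriv T p ht k x hx) k x hx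
  have hF0 : ∀ x, F 0 x = c + ∑ t ∈ T, p t / (x + t) ^ 2 := by
    intro x
    simp [hF, hI, Yseq, div_eq_mul_inv, add_comm]
  have hF1 : ∀ x, F 1 x = ∑ t ∈ T, -2 * (p t / (x + t) ^ 3) := by
    intro x
    simp only [hF, hI, Yseq, div_eq_mul_inv, Finset.mul_sum]
    norm_num [Nat.factorial]
  have hF0pos : ∀ x, 0 < F 0 x := by
    intro x
    rw [hF0]
    have : 0 ≤ ∑ t ∈ T, p t / (x + t) ^ 2 :=
      Finset.sum_nonneg fun t h => div_nonneg (hp t h).le (sq_nonneg _)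
    linarith
  let S := (numPoly T p c).roots.toFinset
  have h0 : numPoly T p c ≠ 0 := by
    intro h
    have := numPoly_pos T p ht hp c hc 1 one_pos
    simp [h] at this
  have hSroot : ∀ r ∈ S, (numPoly T p c).eval r = 0 := by
    intro r hr
    have := (Polynomial.mem_roots h0).mp (Multiset.mem_toFinset.mp hr)
    exact this
  have hSx : ∀ r ∈ S, ∀ x : ℝ, 0 < x → (x : ℂ) - r ≠ 0 := by
    intro r hr x hx h
    apply numPoly_pos T p ht hp c hc x hx
    rw [sub_eq_zero.mp h]
    exact hSroot r hr
  have hQ0 : ∀ x, 0 < x → -F 1 x / F 0 x = Qseq T S 0 x := by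
    intro x hx
    have hpole : ∀ t ∈ T, (x : ℂ) + (t : ℂ) ≠ 0 := by
      intro t h
      have : 0 < x + t := by have := ht t h; linarith
      exact_mod_cast this.ne'
    have hspl := (IsAlgClosed.splits (numPoly T p c)).eval_derivative_div_eval_of_ne_zero
      (numPoly_pos T p ht hp c hc x hx)
    have hnd := numPoly_nodup T p ht hp c hc hgood
    have hroots : ((numPoly T p c).roots.map fun z ↦ 1 / ((x : ℂ) - z)).sum
        = ∑ r ∈ S, 1 / ((x : ℂ) - r) := by
      rw [Finset.sum, Multiset.toFinset_val, hnd.dedup]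
    rw [hroots] at hspl
    have hld : logDeriv (fun z => (numPoly T p c).eval z) (x : ℂ) = ∑ r ∈ S, 1 / ((x : ℂ) - r) := by
      rw [logDeriv_apply, Polynomial.deriv, hspl]
    have hfr := frac_hasDeriv T p c (x : ℂ) hpole
    have hc0 : (c : ℂ) + ∑ t ∈ T, (p t : ℂ) / ((x : ℂ) + t) ^ 2 = ((F 0 x : ℝ) : ℂ) := by
      rw [hF0]; push_cast; rfl
    have hc1 : ∑ t ∈ T, -2 * ((p t : ℂ) / ((x : ℂ) + t) ^ 3) = ((F 1 x : ℝ) : ℂ) := by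
      rw [hF1]; push_cast; rfl
    have hld2 : logDeriv (fun z => (numPoly T p c).eval z) (x : ℂ) =
        (∑ t ∈ T, 2 * (1 / ((x : ℂ) + t))) + ((F 1 x / F 0 x : ℝ) : ℂ) := by
      rw [logDeriv_apply, (numPoly_nhds T p c x hpole).deriv_eq,
        (numPoly_nhds T p c x hpole).eq_of_nhds, ← logDeriv_apply (𝕜 := ℂ) (f := fun z : ℂ =>
      (∏ t ∈ T, (z + t) ^ 2) * ((c : ℂ) + ∑ t ∈ T, (p t : ℂ) / (z + t) ^ 2)), logDeriv_mul]
      · congr 1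
        · rw [logDeriv_prod]
          · refine Finset.sum_congr rfl fun t h => ?_
            have h1 : HasDerivAt (fun z : ℂ => (z + (t : ℂ)) ^ 2) _ (x : ℂ) :=
              ((hasDerivAt_id (x : ℂ)).add_const _).pow 2
            rw [logDeriv_apply, h1.deriv]
            have := hpole t h
            simp
            field_simp
          · exact fun t h => pow_ne_zero _ (hpole t h)
          · intro t h; fun_prop
        · rw [logDeriv_apply, hfr.deriv, hc0, hc1]
          push_cast; rfl
      · exact Finset.prod_ne_zero_iff.mpr fun t ht => pow_ne_zero _ (hpole t ht)
      · rw [hc0]; exact_mod_cast (hF0pos x).ne'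
      · fun_prop
      · exact hfr.differentiableAt
    rw [hld] at hld2
    have hre := congrArg Complex.re hld2
    have hcast : (∑ t ∈ T, 2 * (1 / ((x : ℂ) + t))) = ((∑ t ∈ T, 2 * (1 / (x + t)) : ℝ) : ℂ) := by
      push_cast; rfl
    rw [hcast, Complex.re_sum, ← Complex.ofReal_add, Complex.ofReal_re] at hre
    unfold Qseq
    simp only [pow_zero, Nat.factorial_zero, Nat.cast_one, zero_add, pow_one, one_mul, one_div] at hre ⊢
    rw [hre, Finset.mul_sum, neg_div]
    ring
  have hHQ : Hrec (fun k => F k x) m = Qseq T S m x := by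
    rw [← chain_ratio_iter F hFd (fun x _ => (hF0pos x).ne') m x hx]
    have : (fun x => -F 1 x / F 0 x) =ᶠ[nhds x] Qseq T S 0 := by
      filter_upwards [Ioi_mem_nhds hx] with y hy using hQ0 y hy
    rw [this.iteratedDeriv_eq]
    exact chain_iter (Qseq T S) (fun k x hx => Qseq_hasDeriv T ht S hSx k x hx) m x hx
  have hgoal : Hrec (Yseq c fun k => I k x) m = Qseq T S m x := hHQ
  change 0 ≤ (-1) ^ m * Hrec (Yseq c fun k => I k x) m
  rw [hgoal]
  unfold Qseq
  rw [← mul_assoc, ← mul_assoc, ← mul_pow]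
  rw [show (-1 : ℝ) * -1 = 1 by norm_num, one_pow, one_mul]
  refine mul_nonneg (by positivity) ?_
  rw [sub_nonneg]
  refine le_trans ?_ (key_ineq2 T p ht hp c hc S
    (fun r hr => numPoly_root_pole T p hp c r (hSroot r hr))
    (fun r hr => numPoly_root T p hp c r (hSroot r hr)) x hx (m + 1))
  refine Finset.sum_le_sum fun r _ => ?_
  have := Complex.re_le_norm ((((x : ℂ) - r) ^ (m + 1))⁻¹)
  rwa [norm_inv, norm_pow] at this

theorem Yseq_cont (c : ℝ) : Continuous (fun q : ℝ × (ℕ → ℝ) => Yseq q.1 q.2) := by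
  refine continuous_pi fun k => ?_
  unfold Yseq
  split_ifs <;> fun_prop

theorem disc_all (T : Finset ℝ) (p : ℝ → ℝ) (ht : ∀ t ∈ T, 0 ≤ t) (hp : ∀ t ∈ T, 0 < p t)
    (c : ℝ) (hc : 0 ≤ c) (m : ℕ) (x : ℝ) (hx : 0 < x)
    (h0 : 0 < Yseq c (fun k => ∑ t ∈ T, p t * ((x + t) ^ (k + 2))⁻¹) 0) :
    0 ≤ (-1) ^ m * Hrec (Yseq c fun k => ∑ t ∈ T, p t * ((x + t) ^ (k + 2))⁻¹) m := by
  rcases T.eq_empty_or_nonempty with hT | hT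
  · subst hT
    have hc' : 0 < c := by simpa [Yseq] using h0
    refine disc_good ∅ p ht hp c hc' ?_ m x hx
    intro z _ h
    simp at h
    exact absurd h hc'.ne'
  · obtain ⟨B, hB, hgood⟩ := good_finite T p ht hp hT
    set I : ℕ → ℝ := fun k => ∑ t ∈ T, p t * ((x + t) ^ (k + 2))⁻¹
    have hcont : ContinuousAt (fun c' : ℝ => (-1) ^ m * Hrec (Yseq c' I) m) c := by
      have h1 : Continuous (fun c' : ℝ => Yseq c' I) :=
        (Yseq_cont c).comp (continuous_id.prodMk continuous_const)
      have h2 : ContinuousAt (fun c' : ℝ => Hrec (Yseq c' I) m) c :=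
        ContinuousAt.comp (f := fun c' : ℝ => Yseq c' I) (g := fun z => Hrec z m)
          (Hrec_continuousAt m _ h0.ne') h1.continuousAt
      exact continuousAt_const.mul h2
    have htd := hcont.tendsto.mono_left (nhdsWithin_le_nhds (s := Ioi c))
    refine ge_of_tendsto htd ?_
    have hnB : ∀ᶠ c' in nhdsWithin c (Ioi c), c' ∉ B := by
      have h1 : (B \ {c})ᶜ ∈ nhds c :=
        (hB.subset sdiff_subset).isClosed.isOpen_compl.mem_nhds (by simp)
      filter_upwards [nhdsWithin_le_nhds h1, self_mem_nhdsWithin] with c' h2 h3 h4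
      exact h2 ⟨h4, (show c < c' from h3).ne'⟩
    filter_upwards [hnB, self_mem_nhdsWithin] with c' h2 h3
    exact disc_good T p ht hp c' (lt_of_le_of_lt hc h3) (hgood c' h2) m x hx

theorem ae_nonneg (μ : Measure ℝ) (hμ : μ (Set.Iio 0) = 0) : ∀ᵐ t ∂μ, 0 ≤ t := by
  rw [ae_iff]
  simpa [Set.Iio] using hμ

theorem mom_integrable (μ : Measure ℝ) (hμ : μ (Set.Iio 0) = 0)
    (hint : ∀ x : ℝ, 0 < x → Integrable (fun t => ((x + t) ^ 2)⁻¹) μ) (k : ℕ) (x : ℝ) (hx : 0 < x) :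
    Integrable (fun t => ((x + t) ^ (k + 2))⁻¹) μ := by
  refine Integrable.mono' ((hint x hx).const_mul ((x ^ k)⁻¹)) ?_ ?_
  · exact (by fun_prop : Measurable fun t : ℝ => ((x + t) ^ (k + 2))⁻¹).aestronglyMeasurable
  · filter_upwards [ae_nonneg μ hμ] with t ht
    have h1 : 0 < x + t := by linarith
    rw [Real.norm_of_nonneg (by positivity), ← mul_inv, pow_add]
    have : x ≤ x + t := by linarith
    gcongr

theorem mom_hasDeriv (μ : Measure ℝ) (hμ : μ (Set.Iio 0) = 0)
    (hint : ∀ x : ℝ, 0 < x → Integrable (fun t => ((x + t) ^ 2)⁻¹) μ) (k : ℕ) (x : ℝ) (hx : 0 < x) :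
    HasDerivAt (fun x => ∫ t, ((x + t) ^ (k + 2))⁻¹ ∂μ)
      (-((k : ℝ) + 2) * ∫ t, ((x + t) ^ (k + 1 + 2))⁻¹ ∂μ) x := by
  have hx2 : x / 2 < x := by linarith
  have := hasDerivAt_integral_of_dominated_loc_of_deriv_le (μ := μ) (s := Ioi (x / 2)) (x₀ := x)
    (F := fun x t => ((x + t) ^ (k + 2))⁻¹)
    (F' := fun x t => -((k : ℝ) + 2) * ((x + t) ^ (k + 1 + 2))⁻¹)
    (bound := fun t => ((k : ℝ) + 2) * ((x / 2 + t) ^ (k + 1 + 2))⁻¹)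
    (Ioi_mem_nhds hx2)
    (Eventually.of_forall fun y =>
      (by fun_prop : Measurable fun t : ℝ => ((y + t) ^ (k + 2))⁻¹).aestronglyMeasurable)
    (mom_integrable μ hμ hint k x hx)
    (by
      exact (by fun_prop : Measurable fun t : ℝ =>
        -((k : ℝ) + 2) * ((x + t) ^ (k + 1 + 2))⁻¹).aestronglyMeasurable)
    (by
      filter_upwards [ae_nonneg μ hμ] with t ht y hy
      have hy' : x / 2 < y := hy
      have h1 : 0 < y + t := by linarith
      have h2 : 0 < x / 2 + t := by linarith
      rw [norm_mul, norm_neg, Real.norm_of_nonneg (by positivity), Real.norm_of_nonneg (by positivity)]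
      gcongr)
    ((mom_integrable μ hμ hint (k + 1) (x / 2) (by linarith)).const_mul _)
    (by
      filter_upwards [ae_nonneg μ hμ] with t ht y hy
      have hy' : x / 2 < y := hy
      refine (inv_pow_hasDeriv t y (by linarith) (k + 1)).congr_deriv ?_
      push_cast
      ring)
  rw [← integral_const_mul]
  exact this.2

theorem mom_closure (μ : Measure ℝ) (hμ : μ (Set.Iio 0) = 0) (n : ℕ) (φ : ℝ → Fin n → ℝ)
    (hφ : ∀ k, Integrable (fun t => φ t k) μ) :
    (fun k => ∫ t, φ t k ∂μ) ∈ closure ((Finsupp.linearCombination ℝ φ) ''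
      {q : ℝ →₀ ℝ | (∀ t, 0 ≤ q t) ∧ ∀ t ∈ q.support, 0 ≤ t}) := by
  have hconv : Convex ℝ {q : ℝ →₀ ℝ | (∀ t, 0 ≤ q t) ∧ ∀ t ∈ q.support, 0 ≤ t} := by
    intro q hq r hr a b ha hb _
    refine ⟨fun t => ?_, fun t h => ?_⟩
    · have h1 := hq.1 t
      have h2 := hr.1 t
      simp only [Finsupp.coe_add, Finsupp.coe_smul, Pi.add_apply, Pi.smul_apply, smul_eq_mul]
      positivity
    · by_contra hneg
      have h1 : q t = 0 := by
        by_contra h; exact hneg (hq.2 t (Finsupp.mem_support_iff.mpr h))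
      have h2 : r t = 0 := by
        by_contra h; exact hneg (hr.2 t (Finsupp.mem_support_iff.mpr h))
      rw [Finsupp.mem_support_iff] at h
      simp [h1, h2] at h
  have hconv2 := (hconv.linear_image (Finsupp.linearCombination ℝ φ)).closure
  by_contra hcon
  obtain ⟨f, u, hfu, hK⟩ := geometric_hahn_banach_point_closed hconv2 isClosed_closure hcon
  have hu : u < 0 := by
    have := hK 0 (subset_closure ⟨0, by simp, by simp⟩)
    simpa using this
  have hpos : ∀ t, 0 ≤ t → 0 ≤ f (φ t) := by
    intro t ht
    by_contra hneg
    rw [not_le] at hneg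
    have hmem := hK ((u / f (φ t)) • φ t) (subset_closure ⟨Finsupp.single t (u / f (φ t)), ⟨?_, ?_⟩, ?_⟩)
    · rw [map_smul, smul_eq_mul, div_mul_cancel₀ _ hneg.ne] at hmem
      exact lt_irrefl _ hmem
    · intro s
      rw [Finsupp.single_apply]
      split_ifs
      · exact (div_pos_of_neg_of_neg hu hneg).le
      · exact le_rfl
    · intro s hs
      have := Finsupp.support_single_subset hs
      rw [Finset.mem_singleton] at this
      rw [this]; exact ht
    · simp
  have hJ : (fun k => ∫ t, φ t k ∂μ) = ∫ t, φ t ∂μ := by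
    funext k
    exact (eval_integral hφ k).symm
  rw [hJ, ← f.integral_comp_comm (Integrable.of_eval hφ)] at hfu
  have : 0 ≤ ∫ t, f (φ t) ∂μ := integral_nonneg_of_ae (by
    filter_upwards [ae_nonneg μ hμ] with t ht using hpos t ht)
  linarith

theorem mom_main (μ : Measure ℝ) (hμ : μ (Set.Iio 0) = 0)
    (hint : ∀ x : ℝ, 0 < x → Integrable (fun t => ((x + t) ^ 2)⁻¹) μ)
    (c : ℝ) (hc : 0 ≤ c) (m : ℕ) (x : ℝ) (hx : 0 < x)
    (h0 : 0 < Yseq c (fun k => ∫ t, ((x + t) ^ (k + 2))⁻¹ ∂μ) 0) :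
    0 ≤ (-1) ^ m * Hrec (Yseq c fun k => ∫ t, ((x + t) ^ (k + 2))⁻¹ ∂μ) m := by
  let φ : ℝ → Fin (m + 2) → ℝ := fun t k => ((x + t) ^ ((k : ℕ) + 2))⁻¹
  let ext : (Fin (m + 2) → ℝ) → ℕ → ℝ := fun z k => if h : k < m + 2 then z ⟨k, h⟩ else 0
  have hext : Continuous ext := by
    refine continuous_pi fun k => ?_
    by_cases h : k < m + 2
    · simp only [ext, h, dif_pos]; fun_prop
    · simp only [ext, h, dif_neg, not_false_eq_true]; fun_prop
  have hHext : ∀ (z : Fin (m + 2) → ℝ) (I : ℕ → ℝ), (∀ k : Fin (m + 2), z k = I k) →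
      Hrec (Yseq c (ext z)) m = Hrec (Yseq c I) m ∧ Yseq c (ext z) 0 = Yseq c I 0 := by
    intro z I h
    have : ∀ k, k ≤ m + 1 → Yseq c (ext z) k = Yseq c I k := by
      intro k hk
      have hk' : k < m + 2 := by omega
      have : ext z k = I k := by
        simp only [ext, hk', dif_pos]
        exact h ⟨k, hk'⟩
      simp only [Yseq, this]
    exact ⟨Hrec_congr _ _ m this, this 0 (by omega)⟩
  obtain ⟨z, hzK, hz⟩ := mem_closure_iff_seq_limit.mp
    (mom_closure μ hμ (m + 2) φ (fun k => mom_integrable μ hμ hint k x hx))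
  set J : Fin (m + 2) → ℝ := fun k => ∫ t, φ t k ∂μ with hJdef
  obtain ⟨hJ1, hJ2⟩ := hHext J (fun k => ∫ t, ((x + t) ^ (k + 2))⁻¹ ∂μ) (fun k => rfl)
  rw [← hJ1]
  rw [← hJ2] at h0
  have hYc : Continuous (fun z => Yseq c (ext z)) := (Yseq_cont c).comp (continuous_const.prodMk hext)
  have hcont : ContinuousAt (fun z => (-1) ^ m * Hrec (Yseq c (ext z)) m) J :=
    continuousAt_const.mul (ContinuousAt.comp (f := fun z => Yseq c (ext z)) (g := fun y => Hrec y m)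
      (Hrec_continuousAt m _ h0.ne') hYc.continuousAt)
  refine ge_of_tendsto (hcont.tendsto.comp hz) ?_
  have hY0 : Continuous (fun z => Yseq c (ext z) 0) := (continuous_apply 0).comp hYc
  filter_upwards [(hY0.continuousAt.tendsto.comp hz).eventually_const_lt h0] with i hi
  obtain ⟨q, ⟨hq0, hqs⟩, hqz⟩ := hzK i
  obtain ⟨e1, e2⟩ := hHext (z i) (fun k => ∑ t ∈ q.support, q t * ((x + t) ^ (k + 2))⁻¹) (by
    intro k
    rw [← hqz, Finsupp.linearCombination_apply, Finsupp.sum, Finset.sum_apply]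
    rfl)
  simp only [Function.comp] at hi ⊢
  rw [e1]
  rw [e2] at hi
  exact disc_all q.support q hqs
    (fun t ht => lt_of_le_of_ne (hq0 t) (Finsupp.mem_support_iff.mp ht).symm) c hc m x hx hi

/-- Theorem (Steutel–Kristiansen): every generalized Stieltjes function of order 2
(not identically zero) is logarithmically completely monotonic. -/
theorem stmt1 (f : ℝ → ℝ) (μ : Measure ℝ) (c : ℝ) (hc : 0 ≤ c)
    (hμ : μ (Set.Iio 0) = 0)
    (hint : ∀ x : ℝ, 0 < x → Integrable (fun t => ((x + t) ^ 2)⁻¹) μ)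
    (hf : ∀ x : ℝ, 0 < x → f x = (∫ t, ((x + t) ^ 2)⁻¹ ∂μ) + c)
    (hne : ∃ x : ℝ, 0 < x ∧ f x ≠ 0) :
    CompletelyMonotonic (fun x => -deriv f x / f x) := by
  set I : ℕ → ℝ → ℝ := fun k x => ∫ t, ((x + t) ^ (k + 2))⁻¹ ∂μ with hI
  set F : ℕ → ℝ → ℝ := fun k x => Yseq c (fun k => I k x) k with hF
  have hFd : ∀ k x, 0 < x → HasDerivAt (F k) (F (k + 1) x) x := fun k x hx =>
    Yseq_hasDeriv c I (fun k x hx => mom_hasDeriv μ hμ hint k x hx) k x hx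
  have hfF : ∀ x, 0 < x → f x = F 0 x := by
    intro x hx
    rw [hf x hx]
    simp [hF, hI, Yseq]
  have hI0 : ∀ x : ℝ, 0 ≤ ∫ t, ((x + t) ^ 2)⁻¹ ∂μ := fun x =>
    integral_nonneg fun t => by positivity
  have hFpos : ∀ x, 0 < x → 0 < F 0 x := by
    intro x hx
    rw [← hfF x hx, hf x hx]
    have h1 := hI0 x
    rcases hc.lt_or_eq with hc' | hc'
    · linarith
    · rcases h1.lt_or_eq with h2 | h2
      · linarith
      · exfalso
        rw [eq_comm, integral_eq_zero_iff_of_nonneg (fun t => by positivity) (hint x hx)] at h2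
        have hfalse : ∀ᵐ t ∂μ, False := by
          filter_upwards [h2, ae_nonneg μ hμ] with t h3 h4
          have : 0 < x + t := by linarith
          have h5 : 0 < ((x + t) ^ 2)⁻¹ := by positivity
          simp only [Pi.zero_apply] at h3
          linarith
        have hμ0 : μ = 0 := by
          rw [← ae_eq_bot]
          exact Filter.eventually_false_iff_eq_bot.mp hfalse
        obtain ⟨y, hy, hy2⟩ := hne
        apply hy2
        rw [hf y hy, hμ0, ← hc']
        simp
  have hev : ∀ x, 0 < x → (fun x => -deriv f x / f x) =ᶠ[nhds x] fun x => -F 1 x / F 0 x := by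
    intro x hx
    filter_upwards [Ioi_mem_nhds hx] with y hy
    have hy' : f =ᶠ[nhds y] F 0 := by
      filter_upwards [Ioi_mem_nhds hy] with s hs using hfF s hs
    rw [hy'.deriv_eq, (hFd 0 y hy).deriv, hfF y hy]
  refine ⟨fun x hx => ?_, fun m x hx => ?_⟩
  · exact (chain_ratio_smooth F hFd x hx (hFpos x hx).ne').congr_of_eventuallyEq (hev x hx)
  · rw [(hev x hx).iteratedDeriv_eq,
      chain_ratio_iter F hFd (fun x hx => (hFpos x hx).ne') m x hx]
    exact mom_main μ hμ hint c hc m x hx (hFpos x hx)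
end

section
/- Nielsen's beta function β is logarithmically completely monotonic on (0,∞), and for every c > 0 there exists a positive measure m_c on [0,∞) such that β(x)^c = ∫_0^∞ e^{-xt} dm_c(t) for all x > 0; these measures satisfy m_c * m_d = m_{c+d} (convolution) for all c, d > 0, and m_1 has density 1/(1+e^{-t}) with respect to Lebesgue measure on [0,∞). -/
open MeasureTheory Filter Set

open scoped ENNReal Topology

/-- `m` is a positive measure on `[0,∞)` with Laplace transform `f` on `(0,∞)`. -/
def IsLap (f : ℝ → ℝ) (m : Measure ℝ) : Prop :=
  m (Set.Iio 0) = 0 ∧ SFinite m ∧ ∀ x : ℝ, 0 < x → 0 ≤ f x ∧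
    ∫⁻ t, ENNReal.ofReal (Real.exp (-x * t)) ∂m = ENNReal.ofReal (f x)

lemma IsLap.congr {f g : ℝ → ℝ} {m : Measure ℝ} (h : IsLap f m)
    (hfg : ∀ x, 0 < x → f x = g x) : IsLap g m := by
  refine ⟨h.1, h.2.1, fun x hx => ?_⟩
  rw [← hfg x hx]
  exact h.2.2 x hx

lemma IsLap.integrable {f : ℝ → ℝ} {m : Measure ℝ} (h : IsLap f m) {x : ℝ} (hx : 0 < x) :
    Integrable (fun t => Real.exp (-x * t)) m := by
  refine ⟨by fun_prop, ?_⟩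
  rw [hasFiniteIntegral_iff_ofReal (ae_of_all _ fun t => (Real.exp_pos _).le), (h.2.2 x hx).2]
  exact ENNReal.ofReal_lt_top

lemma IsLap.integral {f : ℝ → ℝ} {m : Measure ℝ} (h : IsLap f m) {x : ℝ} (hx : 0 < x) :
    ∫ t, Real.exp (-x * t) ∂m = f x := by
  rw [integral_eq_lintegral_of_nonneg_ae (ae_of_all _ fun t => (Real.exp_pos _).le) (by fun_prop),
    (h.2.2 x hx).2, ENNReal.toReal_ofReal (h.2.2 x hx).1]

lemma IsLap.mem {f : ℝ → ℝ} {m : Measure ℝ} (h : IsLap f m) {x : ℝ} (hx : 0 < x) :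
    x ∈ interior (ProbabilityTheory.integrableExpSet (fun t : ℝ => -t) m) := by
  rw [mem_interior]
  refine ⟨Ioi 0, ?_, isOpen_Ioi, hx⟩
  intro y hy
  have := h.integrable hy
  simp only [ProbabilityTheory.integrableExpSet, Set.mem_ofPred_eq]
  simpa using this

lemma IsLap.eq_mgf {f : ℝ → ℝ} {m : Measure ℝ} (h : IsLap f m) {x : ℝ} (hx : 0 < x) :
    f =ᶠ[𝓝 x] ProbabilityTheory.mgf (fun t : ℝ => -t) m := by
  filter_upwards [Ioi_mem_nhds hx] with y hy
  rw [← h.integral hy]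
  simp [ProbabilityTheory.mgf]

lemma IsLap.ae_nonneg {f : ℝ → ℝ} {m : Measure ℝ} (h : IsLap f m) : ∀ᵐ t ∂m, 0 ≤ t := by
  rw [ae_iff]
  convert h.1 using 2
  ext t; simp

lemma IsLap.analyticAt {f : ℝ → ℝ} {m : Measure ℝ} (h : IsLap f m) {x : ℝ} (hx : 0 < x) :
    AnalyticAt ℝ f x :=
  (ProbabilityTheory.analyticAt_mgf (h.mem hx)).congr (h.eq_mgf hx).symm

lemma IsLap.contDiffAt {f : ℝ → ℝ} {m : Measure ℝ} (h : IsLap f m) {x : ℝ} (hx : 0 < x) :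
    ContDiffAt ℝ (⊤ : ℕ∞) f x := (h.analyticAt hx).contDiffAt

lemma IsLap.cm {f : ℝ → ℝ} {m : Measure ℝ} (h : IsLap f m) : CompletelyMonotonic f := by
  refine ⟨fun x hx => h.contDiffAt hx, fun n x hx => ?_⟩
  rw [(h.eq_mgf hx).iteratedDeriv_eq n, ProbabilityTheory.iteratedDeriv_mgf (h.mem hx),
    ← integral_const_mul]
  apply integral_nonneg_of_ae
  filter_upwards [h.ae_nonneg] with t ht
  simp only [Pi.zero_apply]
  rw [← mul_assoc, ← mul_pow]
  simp only [neg_mul, one_mul, neg_neg]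
  positivity

lemma IsLap.neg_deriv {f : ℝ → ℝ} {m : Measure ℝ} (h : IsLap f m) :
    ∃ m', IsLap (fun x => -deriv f x) m' := by
  have := h.2.1
  refine ⟨m.withDensity (fun t => ENNReal.ofReal t), ?_, inferInstance, fun x hx => ?_⟩
  · exact withDensity_absolutelyContinuous _ _ h.1
  · have e : -deriv f x = ∫ t, t * Real.exp (-x * t) ∂m := by
      rw [(h.eq_mgf hx).deriv_eq, ProbabilityTheory.deriv_mgf (h.mem hx), ← integral_neg]
      simp
    have hnn : 0 ≤ᵐ[m] fun t => t * Real.exp (-x * t) := by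
      filter_upwards [h.ae_nonneg] with t ht
      simp only [Pi.zero_apply]
      positivity
    refine ⟨?_, ?_⟩
    · beta_reduce; rw [e]; exact integral_nonneg_of_ae hnn
    · beta_reduce
      rw [e, ofReal_integral_eq_lintegral_ofReal _ hnn]
      · rw [lintegral_withDensity_eq_lintegral_mul _ (by fun_prop) (by fun_prop)]
        refine lintegral_congr_ae ?_
        filter_upwards [h.ae_nonneg] with t ht
        simp [ENNReal.ofReal_mul ht]
      · have := ProbabilityTheory.integrable_pow_mul_exp_of_mem_interior_integrableExpSet (h.mem hx) 1
        simpa using this.neg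

lemma IsLap.add {f g : ℝ → ℝ} {m n : Measure ℝ} (hf : IsLap f m) (hg : IsLap g n) :
    IsLap (fun x => f x + g x) (m + n) := by
  have := hf.2.1
  have := hg.2.1
  refine ⟨by simp [hf.1, hg.1], inferInstance, fun x hx => ?_⟩
  obtain ⟨a, b⟩ := hf.2.2 x hx
  obtain ⟨c, d⟩ := hg.2.2 x hx
  exact ⟨by positivity, by rw [lintegral_add_measure, b, d, ENNReal.ofReal_add a c]⟩

lemma IsLap.smul {f : ℝ → ℝ} {m : Measure ℝ} (hf : IsLap f m) {a : ℝ} (ha : 0 ≤ a) :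
    IsLap (fun x => a * f x) (ENNReal.ofReal a • m) := by
  have := hf.2.1
  refine ⟨by simp [hf.1], inferInstance, fun x hx => ?_⟩
  obtain ⟨c, d⟩ := hf.2.2 x hx
  exact ⟨by positivity, by rw [lintegral_smul_measure, d, ENNReal.ofReal_mul ha, smul_eq_mul]⟩

lemma IsLap.mul {f g : ℝ → ℝ} {m n : Measure ℝ} (hf : IsLap f m) (hg : IsLap g n) :
    IsLap (fun x => f x * g x) (m.conv n) := by
  have := hf.2.1
  have := hg.2.1
  refine ⟨?_, inferInstance, fun x hx => ?_⟩
  · rw [Measure.conv, Measure.map_apply (by fun_prop) measurableSet_Iio]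
    refine measure_mono_null (t := (Iio 0 ×ˢ univ) ∪ (univ ×ˢ Iio 0)) ?_ ?_
    · rintro ⟨a, b⟩ hab
      simp only [mem_preimage, mem_Iio] at hab
      by_cases ha : a < 0
      · left; simp [ha]
      · right; simp; linarith
    · rw [measure_union_null_iff, Measure.prod_prod, Measure.prod_prod, hf.1, hg.1]
      simp
  · obtain ⟨a, b⟩ := hf.2.2 x hx
    obtain ⟨c, d⟩ := hg.2.2 x hx
    refine ⟨by positivity, ?_⟩
    rw [Measure.lintegral_conv (by fun_prop), ENNReal.ofReal_mul a, ← b, ← d,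
      ← lintegral_mul_const _ (by fun_prop)]
    refine lintegral_congr fun t => ?_
    rw [← lintegral_const_mul _ (by fun_prop)]
    refine lintegral_congr fun s => ?_
    rw [← ENNReal.ofReal_mul (Real.exp_pos _).le, ← Real.exp_add, mul_add]

lemma isLap_one : IsLap (fun _ => 1) (Measure.dirac 0) := by
  refine ⟨by simp, inferInstance, fun x hx => ⟨by simp, ?_⟩⟩
  rw [lintegral_dirac]
  simp

/-- existence version -/
def Lap (f : ℝ → ℝ) : Prop := ∃ m, IsLap f m

lemma Lap.add {f g : ℝ → ℝ} (hf : Lap f) (hg : Lap g) : Lap (fun x => f x + g x) := by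
  obtain ⟨m, hm⟩ := hf
  obtain ⟨n, hn⟩ := hg
  exact ⟨_, hm.add hn⟩

lemma Lap.mul {f g : ℝ → ℝ} (hf : Lap f) (hg : Lap g) : Lap (fun x => f x * g x) := by
  obtain ⟨m, hm⟩ := hf
  obtain ⟨n, hn⟩ := hg
  exact ⟨_, hm.mul hn⟩

lemma Lap.smul {f : ℝ → ℝ} (hf : Lap f) {a : ℝ} (ha : 0 ≤ a) : Lap (fun x => a * f x) := by
  obtain ⟨m, hm⟩ := hf
  exact ⟨_, hm.smul ha⟩

lemma Lap.congr {f g : ℝ → ℝ} (hf : Lap f) (hfg : ∀ x, 0 < x → f x = g x) : Lap g := by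
  obtain ⟨m, hm⟩ := hf
  exact ⟨_, hm.congr hfg⟩

lemma Lap.pow {f : ℝ → ℝ} (hf : Lap f) (n : ℕ) : Lap (fun x => f x ^ n) := by
  induction n with
  | zero => exact ⟨_, isLap_one.congr (by simp)⟩
  | succ n ih => exact (ih.mul hf).congr (by intros; rw [pow_succ])

lemma Lap.nonneg {f : ℝ → ℝ} (hf : Lap f) {x : ℝ} (hx : 0 < x) : 0 ≤ f x := by
  obtain ⟨m, hm⟩ := hf
  exact (hm.2.2 x hx).1

lemma Lap.hasSum {f : ℕ → ℝ → ℝ} {g : ℝ → ℝ} (hf : ∀ n, Lap (f n))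
    (hs : ∀ x, 0 < x → HasSum (fun n => f n x) (g x)) : Lap g := by
  choose m hm using hf
  have : ∀ n, SFinite (m n) := fun n => (hm n).2.1
  refine ⟨Measure.sum m, ?_, inferInstance, fun x hx => ⟨?_, ?_⟩⟩
  · rw [Measure.sum_apply _ measurableSet_Iio]
    simp [fun n => (hm n).1]
  · exact (hs x hx).nonneg fun n => ((hm n).2.2 x hx).1
  · rw [lintegral_sum_measure, ← (hs x hx).tsum_eq,
      ENNReal.ofReal_tsum_of_nonneg (fun n => ((hm n).2.2 x hx).1) (hs x hx).summable]
    exact tsum_congr fun n => ((hm n).2.2 x hx).2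

lemma Lap.exp {f : ℝ → ℝ} (hf : Lap f) : Lap (fun x => Real.exp (f x)) := by
  refine Lap.hasSum (f := fun n x => (1 / (n.factorial : ℝ)) * f x ^ n)
    (fun n => (hf.pow n).smul (by positivity)) fun x hx => ?_
  have := NormedSpace.expSeries_div_hasSum_exp (f x)
  rw [← Real.exp_eq_exp_ℝ] at this
  simpa [div_eq_inv_mul] using this

lemma Lap.neg_log {f : ℝ → ℝ} (hf : Lap f) (h1 : ∀ x, 0 < x → f x < 1) :
    Lap (fun x => -Real.log (1 - f x)) := by
  refine Lap.hasSum (f := fun n x => (1 / ((n : ℝ) + 1)) * f x ^ (n + 1))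
    (fun n => (hf.pow _).smul (by positivity)) fun x hx => ?_
  have := Real.hasSum_pow_div_log_of_abs_lt_one (x := f x)
    (by rw [abs_of_nonneg (hf.nonneg hx)]; exact h1 x hx)
  simpa [div_eq_inv_mul] using this

lemma Lap.geom {f : ℝ → ℝ} (hf : Lap f) (h1 : ∀ x, 0 < x → f x < 1) :
    Lap (fun x => (1 - f x)⁻¹) :=
  Lap.hasSum (f := fun n x => f x ^ n) hf.pow
    fun x hx => hasSum_geometric_of_lt_one (hf.nonneg hx) (h1 x hx)

lemma isLap_density {g : ℝ → ℝ} (hg : Measurable g) (h0 : ∀ t, 0 ≤ t → 0 ≤ g t)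
    (hi : ∀ x, 0 < x → IntegrableOn (fun t => Real.exp (-x * t) * g t) (Ioi 0)) :
    IsLap (LaplaceTransform g) ((volume.restrict (Set.Ici (0:ℝ))).withDensity
        (fun t => ENNReal.ofReal (g t))) := by
  refine ⟨?_, inferInstance, fun x hx => ?_⟩
  · refine withDensity_absolutelyContinuous _ _ ?_
    rw [Measure.restrict_apply measurableSet_Iio,
      show Iio (0:ℝ) ∩ Ici 0 = ∅ by ext t; simp, measure_empty]
  · have hnn : 0 ≤ᵐ[volume.restrict (Ioi 0)] fun t => Real.exp (-x * t) * g t := by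
      filter_upwards [ae_restrict_mem measurableSet_Ioi] with t ht
      exact mul_nonneg (Real.exp_pos _).le (h0 t (le_of_lt ht))
    refine ⟨integral_nonneg_of_ae hnn, ?_⟩
    rw [LaplaceTransform, ofReal_integral_eq_lintegral_ofReal (hi x hx) hnn,
      lintegral_withDensity_eq_lintegral_mul _ (by fun_prop) (by fun_prop),
      ← Measure.restrict_congr_set Ioi_ae_eq_Ici]
    refine lintegral_congr fun t => ?_
    rw [Pi.mul_apply, mul_comm, ENNReal.ofReal_mul (Real.exp_pos _).le]

lemma lap_rpow {a c : ℝ} (ha : 0 < a) (hc : 0 < c) : Lap (fun x => (x + a) ^ (-c)) := by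
  have key : ∀ x : ℝ, 0 < x → ∫ t in Ioi (0:ℝ), Real.exp (-x * t) *
      (t ^ (c - 1) * Real.exp (-(a * t)) / Real.Gamma c) = (x + a) ^ (-c) := by
    intro x hx
    have := Real.integral_rpow_mul_exp_neg_mul_Ioi hc (show 0 < x + a by positivity)
    have hG := (Real.Gamma_pos_of_pos hc).ne'
    calc _ = ∫ t in Ioi (0:ℝ), (t ^ (c - 1) * Real.exp (-((x + a) * t))) * (Real.Gamma c)⁻¹ := by
          congr 1 with t
          rw [show -((x + a) * t) = -x * t + -(a * t) by ring, Real.exp_add]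
          ring
      _ = _ := by
          rw [integral_mul_const, this, mul_assoc, mul_inv_cancel₀ hG, mul_one, one_div,
            Real.inv_rpow (by positivity), Real.rpow_neg (by positivity)]
  refine ⟨_, (isLap_density (g := fun t => t ^ (c - 1) * Real.exp (-(a * t)) / Real.Gamma c)
    (by fun_prop) ?_ ?_).congr key⟩
  · intro t ht
    have := Real.Gamma_pos_of_pos hc
    positivity
  · intro x hx
    apply Integrable.of_integral_ne_zero
    rw [key x hx]
    positivity

lemma lap_inv {a : ℝ} (ha : 0 < a) : Lap (fun x => (x + a)⁻¹) :=
  (lap_rpow ha one_pos).congr fun x hx => by rw [Real.rpow_neg_one]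

open ProbabilityTheory in
lemma IsLap.unique {f : ℝ → ℝ} {m n : Measure ℝ} (hm : IsLap f m) (hn : IsLap f n) : m = n := by
  let w : ℝ → ℝ≥0∞ := fun t => ENNReal.ofReal (Real.exp (-1 * t))
  have hw : Measurable w := by fun_prop
  have tilt : ∀ m : Measure ℝ, IsLap f m → IsFiniteMeasure (m.withDensity w) ∧
      (∀ s : ℝ, s < 1 → s ∈ integrableExpSet id (m.withDensity w) ∧
        mgf id (m.withDensity w) s = f (1 - s)) := by
    intro m hm
    refine ⟨⟨?_⟩, fun s hs => ?_⟩
    · rw [withDensity_apply _ MeasurableSet.univ, Measure.restrict_univ,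
        (hm.2.2 1 one_pos).2]
      exact ENNReal.ofReal_lt_top
    · have h1 : 0 < 1 - s := by linarith
      have e : ∀ t : ℝ, (w t).toReal • Real.exp (s * id t) = Real.exp (-(1 - s) * t) := by
        intro t
        simp only [w, smul_eq_mul, id]
        rw [ENNReal.toReal_ofReal (Real.exp_pos _).le, ← Real.exp_add]
        ring_nf
      constructor
      · simp only [integrableExpSet, Set.mem_ofPred_eq]
        rw [integrable_withDensity_iff_integrable_smul' hw (ae_of_all _ fun _ => ENNReal.ofReal_lt_top)]
        simp_rw [e]
        exact hm.integrable h1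
      · rw [mgf, integral_withDensity_eq_integral_toReal_smul hw
          (ae_of_all _ fun _ => ENNReal.ofReal_lt_top)]
        simp_rw [e]
        exact hm.integral h1
  obtain ⟨fm, im⟩ := tilt m hm
  obtain ⟨fn, inn⟩ := tilt n hn
  have sub : ∀ μ : Measure ℝ, (∀ s : ℝ, s < 1 → s ∈ integrableExpSet id μ) →
      AnalyticOnNhd ℂ (complexMGF id μ) {z | z.re < 1} := by
    intro μ h
    refine (analyticOnNhd_complexMGF (X := id) (μ := μ)).mono fun z hz => ?_
    exact mem_interior.2 ⟨Iio 1, fun s hs => h s hs, isOpen_Iio, hz⟩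
  have heq : Set.EqOn (complexMGF id (m.withDensity w)) (complexMGF id (n.withDensity w))
      {z | z.re < 1} := by
    refine AnalyticOnNhd.eqOn_of_preconnected_of_frequently_eq (sub _ fun s hs => (im s hs).1)
      (sub _ fun s hs => (inn s hs).1)
      ((convex_Iio (1:ℝ)).linear_preimage Complex.reLm).isPreconnected
      (z₀ := ((0:ℝ) : ℂ)) (by simp) ?_
    have h_real : ∃ᶠ (x : ℝ) in 𝓝[≠] 0,
        complexMGF id (m.withDensity w) x = complexMGF id (n.withDensity w) x := by
      apply Eventually.frequently
      filter_upwards [mem_nhdsWithin_of_mem_nhds (Iio_mem_nhds (zero_lt_one' ℝ))] with y hy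
      rw [complexMGF_ofReal, complexMGF_ofReal, (im y hy).2, (inn y hy).2]
    rw [frequently_iff_seq_forall] at h_real ⊢
    obtain ⟨xs, hx_tendsto, hx_eq⟩ := h_real
    refine ⟨fun n ↦ xs n, ?_, fun n ↦ ?_⟩
    · rw [tendsto_nhdsWithin_iff] at hx_tendsto ⊢
      constructor
      · exact (Complex.continuous_ofReal.tendsto _).comp hx_tendsto.1
      · simpa using hx_tendsto.2
    · simp [hx_eq]
  have hmn : m.withDensity w = n.withDensity w := by
    apply Measure.ext_of_charFun
    funext t
    rw [← complexMGF_id_mul_I, ← complexMGF_id_mul_I]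
    exact heq (by simp)
  have h0 : ∀ t, w t ≠ 0 := fun t => by simp [w, Real.exp_pos]
  have ht : ∀ t, w t ≠ ∞ := fun t => ENNReal.ofReal_ne_top
  rw [← withDensity_inv_same (μ := m) hw (ae_of_all _ h0) (ae_of_all _ ht), hmn,
    withDensity_inv_same hw (ae_of_all _ h0) (ae_of_all _ ht)]

/-- the logistic density -/
noncomputable def phi (t : ℝ) : ℝ := 1 / (1 + Real.exp (-t))

/-- auxiliary density -/
noncomputable def rho (t : ℝ) : ℝ := 4 * Real.exp (-t) ^ 2 / (1 + Real.exp (-t)) ^ 3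

/-- auxiliary density -/
noncomputable def sig (t : ℝ) : ℝ := 1 / 2 * Real.exp (-(1 / 2 * t)) - rho t

lemma measurable_phi : Measurable phi := by unfold phi; fun_prop

lemma measurable_rho : Measurable rho := by unfold rho; fun_prop

lemma measurable_sig : Measurable sig := by
  have := measurable_rho
  unfold sig; fun_prop

lemma rho_nonneg (t : ℝ) : 0 ≤ rho t := by unfold rho; positivity

lemma phi_nonneg (t : ℝ) : 0 ≤ phi t := by unfold phi; positivity

lemma phi_le (t : ℝ) : phi t ≤ 1 := by
  unfold phi
  rw [div_le_one (by positivity)]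
  linarith [Real.exp_pos (-t)]

lemma sig_nonneg (t : ℝ) : 0 ≤ sig t := by
  unfold sig rho
  obtain ⟨v, hv0, hv⟩ : ∃ v : ℝ, 0 < v ∧ Real.exp (-(1 / 2 * t)) = v := ⟨_, Real.exp_pos _, rfl⟩
  have h2 : Real.exp (-t) = v ^ 2 := by
    rw [← hv, ← Real.exp_nat_mul]; congr 1; push_cast; ring
  rw [h2, hv, sub_nonneg, div_le_iff₀ (by positivity)]
  have h3 : (2 * v) ^ 3 ≤ (1 + v ^ 2) ^ 3 :=
    pow_le_pow_left₀ (by positivity) (by nlinarith [sq_nonneg (v - 1)]) 3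
  nlinarith [mul_le_mul_of_nonneg_left h3 hv0.le]

lemma integrable_bdd {g : ℝ → ℝ} (hg : Measurable g) (hb : ∀ t, 0 ≤ t → |g t| ≤ 1) {x : ℝ}
    (hx : 0 < x) : IntegrableOn (fun t => Real.exp (-x * t) * g t) (Ioi 0) := by
  have h1 : IntegrableOn (fun t => Real.exp (-x * t)) (Ioi 0) := by
    simpa using exp_neg_integrableOn_Ioi 0 hx
  refine Integrable.mono h1 (by fun_prop) ?_
  filter_upwards [ae_restrict_mem measurableSet_Ioi] with t ht
  rw [norm_mul]
  exact mul_le_of_le_one_right (norm_nonneg _) (hb t (le_of_lt ht))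

lemma exp_half_le {t : ℝ} (ht : 0 ≤ t) : Real.exp (-(1 / 2 * t)) ≤ 1 := by
  rw [Real.exp_le_one_iff]; linarith

lemma rho_le {t : ℝ} (ht : 0 ≤ t) : |rho t| ≤ 1 := by
  rw [abs_of_nonneg (rho_nonneg t)]
  have := sig_nonneg t
  have := exp_half_le ht
  unfold sig at *
  linarith

lemma sig_le {t : ℝ} (ht : 0 ≤ t) : |sig t| ≤ 1 := by
  rw [abs_of_nonneg (sig_nonneg t)]
  have := rho_nonneg t
  have := exp_half_le ht
  unfold sig at *
  linarith

lemma phi_abs_le (t : ℝ) : |phi t| ≤ 1 := by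
  rw [abs_of_nonneg (phi_nonneg t)]; exact phi_le t

/-- Laplace transform of `rho` -/
noncomputable def RR : ℝ → ℝ := LaplaceTransform rho

/-- Laplace transform of `sig` -/
noncomputable def SS : ℝ → ℝ := LaplaceTransform sig

lemma lap_RR : Lap RR := ⟨_, isLap_density measurable_rho (fun t _ => rho_nonneg t)
  fun _ hx => integrable_bdd measurable_rho (fun _ ht => rho_le ht) hx⟩

lemma lap_SS : Lap SS := ⟨_, isLap_density measurable_sig (fun t _ => sig_nonneg t)
  fun _ hx => integrable_bdd measurable_sig (fun _ ht => sig_le ht) hx⟩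

lemma isLap_beta : IsLap nielsenBeta ((volume.restrict (Set.Ici (0:ℝ))).withDensity
        (fun t => ENNReal.ofReal (1 / (1 + Real.exp (-t))))) := by
  refine (isLap_density measurable_phi (fun t _ => phi_nonneg t)
    fun _ hx => integrable_bdd measurable_phi (fun t _ => phi_abs_le t) hx).congr fun x hx => ?_
  simp [LaplaceTransform, nielsenBeta, phi, div_eq_mul_inv]

lemma SS_eq {x : ℝ} (hx : 0 < x) : SS x = 1 / 2 * (x + 1 / 2)⁻¹ - RR x := by
  have h1 : IntegrableOn (fun t => Real.exp (-(x + 1 / 2) * t)) (Ioi 0) := by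
    simpa using exp_neg_integrableOn_Ioi 0 (show 0 < x + 1 / 2 by positivity)
  have h2 := integrable_bdd measurable_rho (fun _ ht => rho_le ht) hx
  have h3 : ∫ t in Ioi (0:ℝ), Real.exp (-(x + 1 / 2) * t) = (x + 1 / 2)⁻¹ := by
    have := integral_exp_mul_Ioi (a := -(x + 1 / 2)) (by linarith) 0
    rw [this]
    rw [mul_zero, Real.exp_zero, neg_div_neg_eq, one_div]
  unfold SS RR LaplaceTransform
  rw [← h3, ← integral_const_mul, ← integral_sub (h1.const_mul _) h2]
  congr 1 with t
  unfold sig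
  rw [show -(x + 1 / 2) * t = -x * t + -(1 / 2 * t) by ring, Real.exp_add]
  ring

lemma beta_eq {x : ℝ} (hx : 0 < x) : 2 * x * (x + 1) * nielsenBeta x = x + 3 / 2 + RR x := by
  have h1 := integrable_bdd measurable_phi (fun t _ => phi_abs_le t) hx
  have h2 := integrable_bdd measurable_rho (fun _ ht => rho_le ht) hx
  have hb : nielsenBeta x = ∫ t in Ioi (0:ℝ), Real.exp (-x * t) * phi t := by
    simp [nielsenBeta, phi, div_eq_mul_inv]
  let F : ℝ → ℝ := fun t => -(Real.exp (-x * t) *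
    (2 * (x + 1) / (1 + Real.exp (-t)) + 2 * Real.exp (-t) / (1 + Real.exp (-t)) ^ 2))
  have hF : ∀ t ∈ Ici (0:ℝ), HasDerivAt F (2 * x * (x + 1) * (Real.exp (-x * t) * phi t) -
      Real.exp (-x * t) * rho t) t := by
    intro t _
    have e1 : HasDerivAt (fun t : ℝ => Real.exp (-t)) (-Real.exp (-t)) t := by
      simpa using (hasDerivAt_neg t).exp
    have e2 : HasDerivAt (fun t : ℝ => Real.exp (-x * t)) (-x * Real.exp (-x * t)) t := by
      have := ((hasDerivAt_id t).const_mul (-x)).exp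
      simpa [mul_comm] using this
    have hne : 1 + Real.exp (-t) ≠ 0 := by positivity
    have e3 := e1.const_add 1
    have e4 := (hasDerivAt_const t (2 * (x + 1))).div e3 hne
    have e5 := (e1.const_mul 2).div (e3.pow 2) (pow_ne_zero 2 hne)
    have e6 := (e2.mul (e4.add e5)).neg
    refine e6.congr_deriv ?_
    simp only [phi, rho, Pi.add_apply, Pi.div_apply, Pi.pow_apply]
    field_simp
    ring
  have hlim : Tendsto F atTop (𝓝 0) := by
    have l1 : Tendsto (fun t : ℝ => Real.exp (-t)) atTop (𝓝 0) := Real.tendsto_exp_neg_atTop_nhds_zero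
    have l2 : Tendsto (fun t : ℝ => Real.exp (-x * t)) atTop (𝓝 0) := by
      refine Real.tendsto_exp_atBot.comp ?_
      exact tendsto_id.const_mul_atTop_of_neg (by linarith)
    have l3 := l1.const_add 1
    have l4 := (tendsto_const_nhds (x := 2 * (x + 1)) (f := atTop (α := ℝ))).div l3 (by norm_num)
    have l5 := (l1.const_mul 2).div (l3.pow 2) (by norm_num)
    have l6 := (l2.mul (l4.add l5)).neg
    rw [zero_mul, neg_zero] at l6
    exact l6
  have key := integral_Ioi_of_hasDerivAt_of_tendsto' hF ((h1.const_mul _).sub h2) hlim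
  rw [integral_sub (h1.const_mul _) h2, integral_const_mul, ← hb] at key
  have hF0 : F 0 = -(x + 3 / 2) := by
    simp only [F]
    norm_num
    ring
  rw [hF0] at key
  change _ - RR x = _ at key
  linarith

lemma beta_rep : ∃ G : ℝ → ℝ, Lap G ∧
    ∀ x, 0 < x → nielsenBeta x = 1 / 2 * (x + 1 / 2)⁻¹ * Real.exp (G x) := by
  let E' : ℝ → ℝ := fun x => (x + 3 / 2)⁻¹
  let E : ℝ → ℝ := fun x => 1 / 2 * (x + 1 / 2)⁻¹
  let Q : ℝ → ℝ := fun x => RR x * E' x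
  let Q2 : ℝ → ℝ := fun x => Q x * Q x
  let D : ℝ → ℝ := fun x => 1 / 2 * E' x + SS x * E' x
  let P : ℝ → ℝ := fun x => D x * (E x + Q x) * (1 - Q2 x)⁻¹
  have lE' : Lap E' := lap_inv (by norm_num)
  have lE : Lap E := (lap_inv (by norm_num)).smul (by norm_num)
  have lQ : Lap Q := lap_RR.mul lE'
  have lQ2 : Lap Q2 := lQ.mul lQ
  have hE' : ∀ x, 0 < x → E' x < 1 := fun x hx => inv_lt_one_of_one_lt₀ (by linarith)
  have hE : ∀ x, 0 < x → E x < 1 := fun x hx => by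
    change 1 / 2 * (x + 1 / 2)⁻¹ < 1
    rw [← div_eq_mul_inv, div_lt_one (by positivity)]; linarith
  have hQ : ∀ x, 0 < x → Q x < 1 := fun x hx => by
    have h1 := lap_SS.nonneg hx
    rw [SS_eq hx] at h1
    have h2 : RR x < 1 := lt_of_le_of_lt (sub_nonneg.1 h1) (hE x hx)
    exact mul_lt_one_of_nonneg_of_lt_one_left (lap_RR.nonneg hx) h2 (hE' x hx).le
  have hQ2 : ∀ x, 0 < x → Q2 x < 1 := fun x hx =>
    mul_lt_one_of_nonneg_of_lt_one_left (lQ.nonneg hx) (hQ x hx) (hQ x hx).le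
  have lD : Lap D := (lE'.smul (by norm_num)).add (lap_SS.mul lE')
  have lP : Lap P := (lD.mul (lE.add lQ)).mul (lQ2.geom hQ2)
  have hD : ∀ x, 0 < x → D x = E x - Q x := fun x hx => by
    simp only [D, Q, SS_eq hx, E, E']
    field_simp
    ring
  have hP1 : ∀ x, 0 < x → 1 - P x = (1 - E x ^ 2) / (1 - Q x ^ 2) := fun x hx => by
    have : 1 - Q x ^ 2 ≠ 0 := by
      have := hQ2 x hx
      simp only [Q2] at this
      nlinarith
    have h2 : Q2 x = Q x ^ 2 := by simp only [Q2]; ring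
    simp only [P, hD x hx, h2]
    field_simp
    ring
  have hE2 : ∀ x, 0 < x → 0 < 1 - E x ^ 2 := fun x hx => by
    nlinarith [hE x hx, lE.nonneg hx]
  have hQ2' : ∀ x, 0 < x → 0 < 1 - Q x ^ 2 := fun x hx => by
    nlinarith [hQ x hx, lQ.nonneg hx]
  have hP : ∀ x, 0 < x → P x < 1 := fun x hx => by
    have := div_pos (hE2 x hx) (hQ2' x hx)
    rw [← hP1 x hx] at this
    linarith
  refine ⟨_, ((lE'.neg_log hE').add (lP.neg_log hP)).add (lQ.neg_log hQ), fun x hx => ?_⟩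
  have a1 : 0 < 1 - E' x := by linarith [hE' x hx]
  have a2 : 0 < 1 - P x := by linarith [hP x hx]
  have a3 : 0 < 1 - Q x := by linarith [hQ x hx]
  have a4 := lQ.nonneg hx
  rw [Real.exp_add, Real.exp_add, Real.exp_neg, Real.exp_neg, Real.exp_neg, Real.exp_log a1,
    Real.exp_log a2, Real.exp_log a3, hP1 x hx]
  have hb := beta_eq hx
  have hR : RR x = Q x * (x + 3 / 2) := by simp only [Q, E']; field_simp
  rw [hR] at hb
  have e1 : 1 - E' x = (x + 1 / 2) / (x + 3 / 2) := by simp only [E']; field_simp; ring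
  have e2 : 1 - E x ^ 2 = x * (x + 1) / (x + 1 / 2) ^ 2 := by simp only [E]; field_simp; ring
  have e3 : 1 - Q x ^ 2 = (1 - Q x) * (1 + Q x) := by ring
  rw [e1, e2, e3]
  have a5 : 1 + Q x ≠ 0 := by positivity
  have a6 := a3.ne'
  have hb' : nielsenBeta x = (x + 3 / 2) * (1 + Q x) / (2 * x * (x + 1)) := by
    rw [eq_div_iff (by positivity)]; linarith
  rw [hb']
  generalize Q x = q at *
  field_simp

theorem stmt2 :
    LogCompletelyMonotonic nielsenBeta ∧
    ∃ m : ℝ → Measure ℝ,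
      (∀ c : ℝ, 0 < c → (m c) (Set.Iio 0) = 0) ∧
      (∀ c : ℝ, 0 < c → ∀ x : ℝ, 0 < x →
        nielsenBeta x ^ c = ∫ t, Real.exp (-x * t) ∂(m c)) ∧
      (∀ c d : ℝ, 0 < c → 0 < d →
        Measure.map (fun p : ℝ × ℝ => p.1 + p.2) ((m c).prod (m d)) = m (c + d)) ∧
      m 1 = (volume.restrict (Set.Ici (0:ℝ))).withDensity
        (fun t => ENNReal.ofReal (1 / (1 + Real.exp (-t)))) := by
  obtain ⟨G, lG, hG⟩ := beta_rep
  have hpos : ∀ x : ℝ, 0 < x → 0 < nielsenBeta x := fun x hx => by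
    rw [hG x hx]; positivity
  refine ⟨⟨hpos, fun x hx => isLap_beta.contDiffAt hx, ?_⟩, ?_⟩
  · obtain ⟨mG, hmG⟩ := lG
    have l1 : Lap (fun x => (x + 1 / 2)⁻¹ + -deriv G x) :=
      (lap_inv (by norm_num)).add hmG.neg_deriv
    obtain ⟨m, hm⟩ := l1
    refine (hm.congr fun x hx => ?_).cm
    have dG := (hmG.analyticAt hx).differentiableAt.hasDerivAt
    have d1 : HasDerivAt (fun x : ℝ => 1 / 2 * (x + 1 / 2)⁻¹ * Real.exp (G x))
        (1 / 2 * (-1 / (x + 1 / 2) ^ 2) * Real.exp (G x) +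
          1 / 2 * (x + 1 / 2)⁻¹ * (Real.exp (G x) * deriv G x)) x :=
      ((((hasDerivAt_id x).add_const (1 / 2)).inv
        (show x + 1 / 2 ≠ 0 by positivity)).const_mul (1 / 2)).mul dG.exp
    have d2 : deriv nielsenBeta x = _ := (EventuallyEq.deriv_eq (by
      filter_upwards [Ioi_mem_nhds hx] with y hy
      exact hG y hy)).trans d1.deriv
    rw [d2, hG x hx]
    have := Real.exp_pos (G x)
    field_simp
    ring
  · have hc : ∀ c : ℝ, 0 < c → Lap (fun x => nielsenBeta x ^ c) := fun c hc => by
      refine (((lap_rpow (a := 1 / 2) (by norm_num) hc).mul (lG.smul hc.le).exp).smul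
        (a := (1 / 2) ^ c) (by positivity)).congr fun x hx => ?_
      rw [hG x hx, Real.mul_rpow (by positivity) (by positivity),
        Real.mul_rpow (by positivity) (by positivity), Real.inv_rpow (by positivity),
        Real.rpow_neg (by positivity), ← Real.exp_mul, mul_comm c]
      ring
    choose! m hm using hc
    refine ⟨m, fun c hc => (hm c hc).1, fun c hc x hx => ((hm c hc).integral hx).symm, ?_, ?_⟩
    · intro c d hc hd
      refine IsLap.unique (((hm c hc).mul (hm d hd)).congr fun x hx => ?_) (hm _ (add_pos hc hd))
      rw [Real.rpow_add (hpos x hx)]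
    · exact (hm 1 one_pos).unique (isLap_beta.congr fun x hx => (Real.rpow_one _).symm)
end

section
/- The function f(x) = 1/sinh(x) is logarithmically completely monotonic on (0,∞): indeed -f'(x)/f(x) = coth(x) = 1 + 2 Σ_{k=1}^∞ e^{-2kx} is completely monotonic. Moreover, for every λ > 0, f is not a generalized Stieltjes function of order λ (since x^λ f(x) → 0 as x → ∞ while x^λ times any nonzero generalized Stieltjes function of order λ does not tend to 0). -/
open MeasureTheory Filter Set

lemma aux_hasDeriv (x : ℝ) (hx : 0 < x) :
    HasDerivAt (fun y => 1 / Real.sinh y) (-Real.cosh x / Real.sinh x ^ 2) x := by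
  have hs : Real.sinh x ≠ 0 := (Real.sinh_pos_iff.2 hx).ne'
  simpa [one_div] using (Real.hasDerivAt_sinh x).fun_inv hs

lemma aux_logderiv (x : ℝ) (hx : 0 < x) :
    -deriv (fun y => 1 / Real.sinh y) x / (1 / Real.sinh x)
        = Real.cosh x / Real.sinh x := by
  have hs : Real.sinh x ≠ 0 := (Real.sinh_pos_iff.2 hx).ne'
  rw [(aux_hasDeriv x hx).deriv]
  field_simp

lemma aux_coth_deriv (x : ℝ) (hx : 0 < x) :
    HasDerivAt (fun y => Real.cosh y / Real.sinh y - 1)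
      (-((Real.cosh x / Real.sinh x - 1) ^ 2 + 2 * (Real.cosh x / Real.sinh x - 1))) x := by
  have hs : Real.sinh x ≠ 0 := (Real.sinh_pos_iff.2 hx).ne'
  have h := ((Real.hasDerivAt_cosh x).fun_div (Real.hasDerivAt_sinh x) hs).sub_const 1
  refine h.congr_deriv ?_
  field_simp
  ring

lemma aux_eval_nonneg (P : Polynomial NNReal) (y : ℝ) (hy : 0 ≤ y) :
    0 ≤ (P.map NNReal.toRealHom).eval y := by
  rw [Polynomial.eval_map, Polynomial.eval₂_eq_sum_range]
  refine Finset.sum_nonneg fun i _ => mul_nonneg ?_ (pow_nonneg hy i)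
  exact (P.coeff i).2

lemma aux_iter (n : ℕ) : ∃ P : Polynomial NNReal, ∀ x : ℝ, 0 < x →
    iteratedDeriv n (fun x => -deriv (fun y => 1 / Real.sinh y) x / (1 / Real.sinh x)) x
      = (-1) ^ n * (P.map NNReal.toRealHom).eval (Real.cosh x / Real.sinh x - 1) := by
  induction n with
  | zero =>
    refine ⟨1 + Polynomial.X, fun x hx => ?_⟩
    rw [iteratedDeriv_zero, aux_logderiv x hx]
    simp
  | succ n ih =>
    obtain ⟨P, hP⟩ := ih
    refine ⟨P.derivative * (Polynomial.X ^ 2 + 2 * Polynomial.X), fun x hx => ?_⟩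
    rw [iteratedDeriv_succ]
    have he : iteratedDeriv n
        (fun x => -deriv (fun y => 1 / Real.sinh y) x / (1 / Real.sinh x)) =ᶠ[nhds x]
        fun x => (-1) ^ n * (P.map NNReal.toRealHom).eval (Real.cosh x / Real.sinh x - 1) := by
      filter_upwards [Ioi_mem_nhds hx] with y hy using hP y hy
    rw [he.deriv_eq]
    have h1 := ((P.map NNReal.toRealHom).hasDerivAt (Real.cosh x / Real.sinh x - 1)).comp x
      (aux_coth_deriv x hx)
    have h2 := (h1.const_mul ((-1 : ℝ) ^ n)).deriv
    simp only [Function.comp_def] at h2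
    rw [h2]
    simp only [Polynomial.derivative_map, Polynomial.map_mul, Polynomial.map_add,
      Polynomial.map_pow, Polynomial.map_X, Polynomial.map_ofNat, Polynomial.eval_mul,
      Polynomial.eval_add, Polynomial.eval_pow, Polynomial.eval_X, Polynomial.eval_ofNat]
    ring

lemma aux_coth_ge (x : ℝ) (hx : 0 < x) : 0 ≤ Real.cosh x / Real.sinh x - 1 := by
  have hs := Real.sinh_pos_iff.2 hx
  rw [sub_nonneg, one_le_div hs]
  exact (Real.sinh_lt_cosh x).le

lemma aux_series (x : ℝ) (hx : 0 < x) : Real.cosh x / Real.sinh x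
        = 1 + 2 * ∑' k : ℕ, Real.exp (-2 * ((k : ℝ) + 1) * x) := by
  have h : ∀ k : ℕ, Real.exp (-2 * ((k : ℝ) + 1) * x)
      = Real.exp (-2 * x) * Real.exp (-2 * x) ^ k := by
    intro k
    rw [← Real.exp_nat_mul, ← Real.exp_add]
    congr 1
    ring
  have hr : Real.exp (-2 * x) < 1 := by
    rw [← Real.exp_zero]
    exact Real.exp_lt_exp.2 (by linarith)
  simp_rw [h]
  rw [tsum_mul_left, tsum_geometric_of_lt_one (Real.exp_pos _).le hr]
  have hs : Real.sinh x ≠ 0 := (Real.sinh_pos_iff.2 hx).ne'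
  have h1 : 1 - Real.exp (-2 * x) ≠ 0 := by linarith
  have h2 : Real.exp (-2 * x) = Real.exp (-x) * Real.exp (-x) := by
    rw [← Real.exp_add]; congr 1; ring
  have h3 : Real.exp x * Real.exp (-x) = 1 := by rw [← Real.exp_add]; simp
  have h4 : Real.cosh x / Real.sinh x * (1 - Real.exp (-2 * x)) = 1 + Real.exp (-2 * x) := by
    rw [div_mul_eq_mul_div, div_eq_iff hs, Real.cosh_eq, Real.sinh_eq, h2]
    linear_combination (-Real.exp (-x)) * h3
  have h5 : 1 + 2 * (Real.exp (-2 * x) * (1 - Real.exp (-2 * x))⁻¹)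
      = (1 + Real.exp (-2 * x)) / (1 - Real.exp (-2 * x)) := by
    rw [eq_div_iff h1, add_mul, mul_assoc, mul_assoc, inv_mul_cancel₀ h1]
    ring
  rw [h5, eq_div_iff h1, h4]

lemma aux_not_stieltjes (lam : ℝ) (hl : 0 < lam) :
    ¬ IsGenStieltjes lam (fun x => 1 / Real.sinh x) := by
  rintro ⟨μ, c, hc, hμ, h⟩
  obtain ⟨hi1, he1⟩ := h 1 one_pos
  have hae : ∀ᵐ t ∂μ, 0 ≤ t := by
    rw [ae_iff]
    convert hμ using 2
    ext t
    simp
  have key : ∀ x : ℝ, 1 ≤ x → x ^ (-lam) * (1 / Real.sinh 1) ≤ 1 / Real.sinh x := by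
    intro x hx
    have hx0 : 0 < x := by linarith
    obtain ⟨hi, he⟩ := h x hx0
    simp only at he he1
    rw [he, he1, mul_add, ← integral_const_mul]
    refine add_le_add (integral_mono_ae (hi1.const_mul _) hi ?_) ?_
    · filter_upwards [hae] with t ht
      rw [← Real.mul_rpow hx0.le (by linarith)]
      exact Real.rpow_le_rpow_of_nonpos (by linarith) (by nlinarith) (by linarith)
    · have : x ^ (-lam) ≤ 1 := Real.rpow_le_one_of_one_le_of_nonpos hx (by linarith)
      nlinarith
  have hlim := (tendsto_rpow_mul_exp_neg_mul_atTop_nhds_zero lam 1 one_pos).const_mul 4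
  have hs1 : 0 < 1 / Real.sinh 1 := one_div_pos.2 (Real.sinh_pos_iff.2 one_pos)
  rw [mul_zero] at hlim
  obtain ⟨x, hx, hx1⟩ := ((hlim.eventually_lt_const hs1).and (eventually_ge_atTop 1)).exists
  have hx0 : 0 < x := by linarith
  have hk := key x hx1
  have hp : 0 < x ^ lam := Real.rpow_pos_of_pos hx0 _
  have hsx : Real.exp x / 4 ≤ Real.sinh x := by
    rw [Real.sinh_eq]
    have a := Real.add_one_le_exp x
    have b : Real.exp (-x) ≤ 1 := Real.exp_le_one_iff.2 (by linarith)
    linarith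
  have hle : 1 / Real.sinh x ≤ 4 * Real.exp (-x) := by
    calc 1 / Real.sinh x ≤ 1 / (Real.exp x / 4) :=
          one_div_le_one_div_of_le (by positivity) hsx
      _ = 4 * Real.exp (-x) := by rw [Real.exp_neg]; field_simp
  rw [Real.rpow_neg hx0.le] at hk
  have h3 : 1 / Real.sinh 1 ≤ x ^ lam * (4 * Real.exp (-x)) := by
    have := mul_le_mul_of_nonneg_left (hk.trans hle) hp.le
    rwa [← mul_assoc, mul_inv_cancel₀ hp.ne', one_mul] at this
  rw [neg_one_mul] at hx
  linarith

/-- Theorem: `1/sinh` is logarithmically completely monotonic, with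
`-f'/f = coth x = 1 + 2 Σ_{k≥1} e^{-2kx}`, but it is not a generalized Stieltjes
function of any order `lam > 0`. -/
theorem stmt3 :
    LogCompletelyMonotonic (fun x => 1 / Real.sinh x) ∧
    (∀ x : ℝ, 0 < x →
      -deriv (fun y => 1 / Real.sinh y) x / (1 / Real.sinh x)
        = Real.cosh x / Real.sinh x ∧
      Real.cosh x / Real.sinh x
        = 1 + 2 * ∑' k : ℕ, Real.exp (-2 * ((k : ℝ) + 1) * x)) ∧
    (∀ lam : ℝ, 0 < lam → ¬ IsGenStieltjes lam (fun x => 1 / Real.sinh x)) := by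
  have hsm : ∀ x : ℝ, 0 < x → ContDiffAt ℝ (⊤ : ℕ∞) (fun x => 1 / Real.sinh x) x := by
    intro x hx
    exact contDiffAt_const.div Real.contDiff_sinh.contDiffAt (Real.sinh_pos_iff.2 hx).ne'
  refine ⟨⟨fun x hx => one_div_pos.2 (Real.sinh_pos_iff.2 hx), hsm, ?_, ?_⟩,
    fun x hx => ⟨aux_logderiv x hx, aux_series x hx⟩, aux_not_stieltjes⟩
  · intro x hx
    have : ContDiffAt ℝ (⊤ : ℕ∞) (fun x => Real.cosh x / Real.sinh x) x :=
      Real.contDiff_cosh.contDiffAt.div Real.contDiff_sinh.contDiffAt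
        (Real.sinh_pos_iff.2 hx).ne'
    refine this.congr_of_eventuallyEq ?_
    filter_upwards [Ioi_mem_nhds hx] with y hy using aux_logderiv y hy
  · intro n x hx
    obtain ⟨P, hP⟩ := aux_iter n
    rw [hP x hx, ← mul_assoc, ← mul_pow]
    simpa using aux_eval_nonneg P _ (aux_coth_ge x hx)
end

section
/- For every real r > 2 there exist c > 0 and a complex number z_c with Re z_c > 0 such that (c/(1+c)) z_c^{-r} + (1/(1+c)) (z_c+1)^{-r} = 0, where complex powers are defined via the principal logarithm. Consequently, for every r > 2 there is a function of the form g_c(x) = (c/(1+c)) x^{-r} + (1/(1+c)) (x+1)^{-r}, which is a generalized Stieltjes function of order r on (0,∞), whose holomorphic extension to the right half-plane has a zero there, so g_c is not logarithmically completely monotonic. -/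
open MeasureTheory Filter Set

lemma ofReal_iterDeriv {F : ℂ → ℂ} {h : ℝ → ℝ}
    (hF : ∀ x : ℝ, 0 < x → AnalyticAt ℂ F x) (he : ∀ x : ℝ, 0 < x → F x = h x) (n : ℕ) :
    ∀ x : ℝ, 0 < x → iteratedDeriv n F x = ((iteratedDeriv n h x : ℝ) : ℂ) := by
  induction n with
  | zero => simpa using he
  | succ n ih =>
    intro x hx
    rw [iteratedDeriv_succ, iteratedDeriv_succ]
    have hA : AnalyticAt ℂ (iteratedDeriv n F) x := by
      rw [iteratedDeriv_eq_iterate]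
      exact (hF x hx).iterated_deriv n
    have hd : HasDerivAt (iteratedDeriv n F) (deriv (iteratedDeriv n F) x) x :=
      hA.differentiableAt.hasDerivAt
    have hev : ∀ᶠ y : ℝ in nhds x, 0 < y := lt_mem_nhds hx
    have h1 : HasDerivAt (iteratedDeriv n h) (deriv (iteratedDeriv n F) x).re x := by
      refine hd.real_of_complex.congr_of_eventuallyEq ?_
      filter_upwards [hev] with y hy
      rw [ih y hy, Complex.ofReal_re]
    have h2 := h1.ofReal_comp
    have h3 : HasDerivAt (fun y : ℝ => ((iteratedDeriv n h y : ℝ) : ℂ))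
        (deriv (iteratedDeriv n F) x) x := by
      refine hd.comp_ofReal.congr_of_eventuallyEq ?_
      filter_upwards [hev] with y hy
      rw [ih y hy]
    rw [h1.deriv]
    exact h3.unique h2

lemma cm_bound {h : ℝ → ℝ} (hh : CompletelyMonotonic h) {x a : ℝ} (hx : 0 < x) (hxa : x < a)
    (n : ℕ) : |iteratedDeriv n h a| / (n.factorial : ℝ) * (a - x) ^ n ≤ h x := by
  have ha : 0 < a := hx.trans hxa
  have hcd : ∀ m : ℕ, ContDiffOn ℝ m h (uIcc a x) := by
    intro m y hy
    rw [uIcc_of_ge hxa.le] at hy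
    exact ((hh.1 y (hx.trans_le hy.1)).of_le (by exact_mod_cast le_top)).contDiffWithinAt
  obtain ⟨y, hy, hE⟩ := taylor_mean_remainder_lagrange_iteratedDeriv (n := n) hxa.ne'
    (by exact_mod_cast hcd (n + 1))
  rw [uIoo_of_gt hxa] at hy
  have hu : UniqueDiffOn ℝ (uIcc a x) := uniqueDiffOn_uIcc hxa.ne'
  have hpow : ∀ m : ℕ, (x - a) ^ m = (-1) ^ m * (a - x) ^ m := by
    intro m; rw [← mul_pow]; congr 1; ring
  have hrem : 0 ≤ iteratedDeriv (n + 1) h y * (x - a) ^ (n + 1) / ((n + 1).factorial : ℝ) := by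
    rw [hpow]
    have h1 := hh.2 (n + 1) y (hx.trans hy.1)
    have h2 : 0 ≤ (a - x) ^ (n + 1) := pow_nonneg (by linarith) _
    have h3 := mul_nonneg h1 h2
    refine div_nonneg ?_ (by positivity)
    linarith [h3]
  have hterm : ∀ k : ℕ, ((k.factorial : ℝ)⁻¹ * (x - a) ^ k) • iteratedDerivWithin k h (uIcc a x) a
      = |iteratedDeriv k h a| / (k.factorial : ℝ) * (a - x) ^ k := by
    intro k
    rw [iteratedDerivWithin_eq_iteratedDeriv hu
      ((hh.1 a ha).of_le (by exact_mod_cast le_top)) left_mem_uIcc, hpow]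
    have h1 := hh.2 k a ha
    have h2 : |iteratedDeriv k h a| = (-1) ^ k * iteratedDeriv k h a := by
      rw [← abs_of_nonneg h1, abs_mul, abs_pow, abs_neg, abs_one, one_pow, one_mul]
    rw [h2, smul_eq_mul]
    ring
  rw [taylor_within_apply, Finset.sum_congr rfl (fun k _ => hterm k)] at hE
  have hle := Finset.single_le_sum
    (f := fun k : ℕ => |iteratedDeriv k h a| / (k.factorial : ℝ) * (a - x) ^ k)
    (s := Finset.range (n + 1)) (fun k _ => by
      have : 0 ≤ (a - x) ^ k := pow_nonneg (by linarith) _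
      positivity) (Finset.self_mem_range_succ n)
  linarith

lemma cm_extend {F : ℂ → ℂ} {h : ℝ → ℝ} (hh : CompletelyMonotonic h)
    (hF : ∀ x : ℝ, 0 < x → AnalyticAt ℂ F x) (he : ∀ x : ℝ, 0 < x → F x = h x)
    {x a : ℝ} (hx : 0 < x) (hxa : x < a) :
    ∃ H : ℂ → ℂ, AnalyticOnNhd ℂ H (Metric.ball (a : ℂ) (a - x)) ∧ H =ᶠ[nhds (a : ℂ)] F := by
  have ha : 0 < a := hx.trans hxa
  have hp := (hF a ha).hasFPowerSeriesAt
  set p := FormalMultilinearSeries.ofScalars ℂ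
    (fun n ↦ iteratedDeriv n F (a : ℂ) / (n.factorial : ℂ)) with hpdef
  obtain ⟨R, hR⟩ : ∃ R : NNReal, (R : ℝ) = a - x := ⟨⟨a - x, by linarith⟩, rfl⟩
  have hrad : (R : ENNReal) ≤ p.radius := by
    refine p.le_radius_of_bound (h x) fun n => ?_
    rw [hpdef, FormalMultilinearSeries.ofScalars_norm, ofReal_iterDeriv hF he n a ha, hR]
    simpa using cm_bound hh hx hxa n
  have hR0 : 0 < R := by
    rw [← NNReal.coe_pos, hR]; linarith
  have hpos : 0 < p.radius := lt_of_lt_of_le (by exact_mod_cast hR0) hrad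
  have hB := p.hasFPowerSeriesOnBall hpos
  have hB' := hB.comp_sub (a : ℂ)
  rw [zero_add] at hB'
  refine ⟨fun z => p.sum (z - a), ?_, ?_⟩
  · intro z hz
    refine hB'.analyticOnNhd z ?_
    refine Metric.eball_subset_eball hrad ?_
    rw [Metric.eball_coe, hR]
    exact hz
  · obtain ⟨ε, hε⟩ := hp
    exact Filter.eventuallyEq_of_mem (Metric.eball_mem_nhds _ hε.r_pos)
      ((hB'.mono hε.r_pos hε.r_le).unique hε)

lemma not_lcm {G : ℂ → ℂ} {g : ℝ → ℝ} (hG : ∀ z : ℂ, 0 < z.re → AnalyticAt ℂ G z)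
    (he : ∀ x : ℝ, 0 < x → G x = g x) {z : ℂ} (hz : 0 < z.re) (h0 : G z = 0)
    (h1 : deriv G z ≠ 0) : ¬ LogCompletelyMonotonic g := by
  rintro ⟨hpos, -, hcm⟩
  have hG' : ∀ x : ℝ, 0 < x → AnalyticAt ℂ G x := fun x hx => hG x (by simpa using hx)
  have hne : ∀ x : ℝ, 0 < x → G x ≠ 0 := fun x hx => by
    rw [he x hx]; exact_mod_cast (hpos x hx).ne'
  have hd : ∀ x : ℝ, 0 < x → deriv G x = ((deriv g x : ℝ) : ℂ) := fun x hx => by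
    simpa using ofReal_iterDeriv hG' he 1 x hx
  obtain ⟨x, a, hx, hxa, hza⟩ : ∃ x a : ℝ, 0 < x ∧ x < a ∧ ‖z - a‖ < a - x := by
    have hzn : 0 < ‖z‖ := norm_pos_iff.2 (by rintro rfl; simp at hz)
    set a := ‖z‖ ^ 2 / z.re with hadef
    have ha : 0 < a := by positivity
    have hlt : ‖z - a‖ < a := by
      refine lt_of_pow_lt_pow_left₀ 2 ha.le ?_
      rw [Complex.sq_norm, Complex.normSq_apply]
      have e1 : ‖z‖ ^ 2 = a * z.re := by rw [hadef]; field_simp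
      rw [Complex.sq_norm, Complex.normSq_apply] at e1
      simp only [Complex.sub_re, Complex.sub_im, Complex.ofReal_re, Complex.ofReal_im]
      nlinarith [mul_pos ha hz]
    exact ⟨(a - ‖z - a‖) / 2, a, by linarith, by linarith [norm_nonneg (z - a)], by linarith⟩
  have ha : 0 < a := hx.trans hxa
  obtain ⟨H, hH, hHF⟩ := cm_extend (F := fun z => -deriv G z / G z) hcm
    (fun x hx => ((hG' x hx).deriv.neg).div (hG' x hx) (hne x hx))
    (fun x hx => by simp only [hd x hx, he x hx]; push_cast; rfl) hx hxa
  have hre : ∀ w ∈ Metric.ball (a : ℂ) (a - x), 0 < w.re := by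
    intro w hw
    rw [mem_ball_iff_norm] at hw
    have := (Complex.abs_re_le_norm (w - a)).trans_lt hw
    rw [abs_lt] at this
    simp at this
    linarith
  have hEq : EqOn (fun w => H w * G w) (fun w => -deriv G w) (Metric.ball (a : ℂ) (a - x)) := by
    refine AnalyticOnNhd.eqOn_of_preconnected_of_eventuallyEq (𝕜 := ℂ) (z₀ := (a : ℂ))
      (fun w hw => (hH w hw).mul (hG w (hre w hw))) (fun w hw => (hG w (hre w hw)).deriv.neg)
      (convex_ball _ _).isPreconnected (Metric.mem_ball_self (by linarith)) ?_
    filter_upwards [hHF, (hG' a ha).continuousAt.eventually_ne (hne a ha)] with w hw hw'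
    rw [hw, div_mul_cancel₀ _ hw']
  have := hEq (mem_ball_iff_norm.2 hza)
  simp only [h0, mul_zero] at this
  exact h1 (neg_eq_zero.1 this.symm)

lemma stieltjes_two {r A B : ℝ} (hA : 0 ≤ A) (hB : 0 ≤ B) :
    IsGenStieltjes r (fun x => A * x ^ (-r) + B * (x + 1) ^ (-r)) := by
  refine ⟨ENNReal.ofReal A • Measure.dirac 0 + ENNReal.ofReal B • Measure.dirac 1, 0, le_rfl,
    ?_, ?_⟩
  · simp
  · intro x hx
    have i1 : Integrable (fun t => (x + t) ^ (-r)) (ENNReal.ofReal A • Measure.dirac (0:ℝ)) :=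
      (integrable_dirac (by simp)).smul_measure ENNReal.ofReal_ne_top
    have i2 : Integrable (fun t => (x + t) ^ (-r)) (ENNReal.ofReal B • Measure.dirac (1:ℝ)) :=
      (integrable_dirac (by simp)).smul_measure ENNReal.ofReal_ne_top
    refine ⟨i1.add_measure i2, ?_⟩
    rw [integral_add_measure i1 i2]
    simp [hA, hB, ENNReal.toReal_ofReal]

lemma exists_zero (r : ℝ) (hr : 2 < r) : ∃ c : ℝ, 0 < c ∧ ∃ z : ℂ, 0 < z.re ∧
    (z + 1) ^ (-(r : ℂ)) = -(c : ℂ) * z ^ (-(r : ℂ)) := by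
  have hπ := Real.pi_pos
  have hr0 : 0 < r := by linarith
  have hθ0 : 0 < Real.pi / r := by positivity
  have hθ1 : Real.pi / r < Real.pi / 2 := div_lt_div_of_pos_left hπ (by norm_num) hr
  set θ := Real.pi / r with hθ
  have hcos : 0 < Real.cos θ := Real.cos_pos_of_mem_Ioo ⟨by linarith, hθ1⟩
  set s := Real.log (2 / Real.cos θ) with hs
  set u : ℂ := (s : ℂ) + θ * Complex.I with hu
  have hure : u.re = s := by simp [hu]
  have huim : u.im = θ := by simp [hu]
  set w := Complex.exp u with hw
  have hwre : w.re = 2 := by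
    rw [hw, Complex.exp_re, hure, huim, hs, Real.exp_log (by positivity)]
    field_simp
  have hlog : Complex.log w = u := Complex.log_exp (by rw [huim]; linarith) (by rw [huim]; linarith)
  have hw1re : (w - 1).re = 1 := by simp [hwre]; norm_num
  have hw1 : w - 1 ≠ 0 := by intro h; rw [h] at hw1re; simp at hw1re
  have hw0 : w ≠ 0 := Complex.exp_ne_zero _
  have hz0 : (w - 1)⁻¹ ≠ 0 := inv_ne_zero hw1
  have hzre : 0 < ((w - 1)⁻¹).re := by
    rw [Complex.inv_re, hw1re]
    exact div_pos one_pos (Complex.normSq_pos.2 hw1)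
  refine ⟨Real.exp (-(r * s)), Real.exp_pos _, (w - 1)⁻¹, hzre, ?_⟩
  have hzw : (w - 1)⁻¹ + 1 = w * (w - 1)⁻¹ := by field_simp; ring
  have a1 := abs_lt.1 (Complex.abs_arg_lt_pi_div_two_iff.2 (Or.inl hzre))
  have a2 := abs_lt.1 (Complex.abs_arg_lt_pi_div_two_iff.2
    (Or.inl (show 0 < w.re by rw [hwre]; norm_num)))
  have hlm : Complex.log (w * (w - 1)⁻¹) = Complex.log w + Complex.log (w - 1)⁻¹ :=
    Complex.log_mul hw0 hz0 ⟨by linarith [a1.1, a2.1], by linarith [a1.2, a2.2]⟩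
  rw [hzw, Complex.cpow_def_of_ne_zero (mul_ne_zero hw0 hz0), Complex.cpow_def_of_ne_zero hz0,
    hlm, hlog, add_mul, Complex.exp_add]
  congr 1
  have : u * -(r : ℂ) = ((-(r * s) : ℝ) : ℂ) + -(Real.pi * Complex.I) := by
    have hrθ : (θ : ℂ) * r = Real.pi := by
      rw [← Complex.ofReal_mul, hθ, div_mul_cancel₀ _ hr0.ne']
    rw [hu, ← hrθ]; push_cast; ring
  rw [this, Complex.exp_add, Complex.exp_neg (_ * _), Complex.exp_pi_mul_I, Complex.ofReal_exp]
  norm_num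

/-- Theorem: for every `r > 2` there is `c > 0` such that the generalized Stieltjes function
`g_c(x) = (c/(1+c)) x^{-r} + (1/(1+c)) (x+1)^{-r}` of order `r` has a zero of its holomorphic
extension in the right half-plane, and hence is not logarithmically completely monotonic. -/
theorem stmt4 (r : ℝ) (hr : 2 < r) :
    ∃ c : ℝ, 0 < c ∧
      (∃ z : ℂ, 0 < z.re ∧
        ((c / (1 + c) : ℝ) : ℂ) * z ^ (-(r : ℂ)) +
          ((1 / (1 + c) : ℝ) : ℂ) * (z + 1) ^ (-(r : ℂ)) = 0) ∧
      IsGenStieltjes r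
        (fun x => c / (1 + c) * x ^ (-r) + 1 / (1 + c) * (x + 1) ^ (-r)) ∧
      ¬ LogCompletelyMonotonic
        (fun x => c / (1 + c) * x ^ (-r) + 1 / (1 + c) * (x + 1) ^ (-r)) := by
  obtain ⟨c, hc, z, hz, hzero⟩ := exists_zero r hr
  have hA : 0 < c / (1 + c) := by positivity
  have hB : 0 < 1 / (1 + c) := by positivity
  have hsum : ((c / (1 + c) : ℝ) : ℂ) * z ^ (-(r : ℂ)) +
          ((1 / (1 + c) : ℝ) : ℂ) * (z + 1) ^ (-(r : ℂ)) = 0 := by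
    rw [hzero]; push_cast; ring
  refine ⟨c, hc, ⟨z, hz, hsum⟩, stieltjes_two hA.le hB.le, ?_⟩
  have hsl : ∀ w : ℂ, 0 < w.re → w ∈ Complex.slitPlane ∧ w + 1 ∈ Complex.slitPlane :=
    fun w hw => ⟨Or.inl hw, Or.inl (by simp; linarith)⟩
  have hder : ∀ w : ℂ, 0 < w.re → HasDerivAt
      (fun w : ℂ => ((c / (1 + c) : ℝ) : ℂ) * w ^ (-(r : ℂ)) +
          ((1 / (1 + c) : ℝ) : ℂ) * (w + 1) ^ (-(r : ℂ)))
      (((c / (1 + c) : ℝ) : ℂ) * (-(r : ℂ) * w ^ (-(r : ℂ) - 1) * 1) +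
          ((1 / (1 + c) : ℝ) : ℂ) * (-(r : ℂ) * (w + 1) ^ (-(r : ℂ) - 1) * 1)) w := by
    intro w hw
    exact (((hasDerivAt_id w).cpow_const (hsl w hw).1).const_mul _).add
      ((((hasDerivAt_id w).add_const 1).cpow_const (hsl w hw).2).const_mul _)
  refine not_lcm (G := fun w : ℂ => ((c / (1 + c) : ℝ) : ℂ) * w ^ (-(r : ℂ)) +
          ((1 / (1 + c) : ℝ) : ℂ) * (w + 1) ^ (-(r : ℂ))) ?_ ?_ hz hsum ?_
  · intro w hw
    exact (analyticAt_const.mul (analyticAt_id.cpow analyticAt_const (hsl w hw).1)).add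
      (analyticAt_const.mul
        ((analyticAt_id.add analyticAt_const).cpow analyticAt_const (hsl w hw).2))
  · intro x hx
    push_cast [Complex.ofReal_cpow hx.le, Complex.ofReal_cpow (show 0 ≤ x + 1 by linarith)]
    rfl
  · have hz0 : z ≠ 0 := by rintro rfl; simp at hz
    have hz1 : z + 1 ≠ 0 := Complex.slitPlane_ne_zero (hsl z hz).2
    rw [(hder z hz).deriv, Complex.cpow_sub _ _ hz0, Complex.cpow_sub _ _ hz1, Complex.cpow_one,
      Complex.cpow_one, hzero]
    have hp : z ^ (-(r : ℂ)) ≠ 0 := by simp [Complex.cpow_eq_zero_iff, hz0]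
    have hcC : (c : ℂ) ≠ 0 := by exact_mod_cast hc.ne'
    have hc1 : (1 + c : ℂ) ≠ 0 := by exact_mod_cast (by positivity : (1 + c) ≠ 0)
    have hrC : (r : ℂ) ≠ 0 := by exact_mod_cast (by linarith : r ≠ 0)
    have : ((c / (1 + c) : ℝ) : ℂ) * (-(r : ℂ) * (z ^ (-(r : ℂ)) / z) * 1) +
          ((1 / (1 + c) : ℝ) : ℂ) * (-(r : ℂ) * (-(c : ℂ) * z ^ (-(r : ℂ)) / (z + 1)) * 1)
        = -(c * r * z ^ (-(r : ℂ))) / ((1 + c) * (z * (z + 1))) := by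
      push_cast
      field_simp
      ring
    rw [this]
    exact div_ne_zero (neg_ne_zero.2 (mul_ne_zero (mul_ne_zero hcC hrC) hp))
      (mul_ne_zero hc1 (mul_ne_zero hz0 hz1))
end
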